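/- arXiv:0903.4785 — 3 statements merged into one kernel-verified Lean document; each statement's English description precedes it below -/
import Mathlib

section
/- Let N ≥ 1, let w ≥ 2 be even, let n be an integer with 0 < n < w, and set ñ = w − n. Define R_n(z) = c_n^{−1}·Σ_{(a b; c d) ∈ Γ₀(N)} 1/((az+b)^{ñ+1}(cz+d)^{n+1}) for z in the upper half-plane, where c_n = (−1)^n·4πi·(2i)^{−w−1}·C(w,n). Then R_n is a cusp form of weight w+2 on Γ₀(N), and for every cusp form f of weight w+2 on Γ₀(N) one has r_n(f) = ⟨f, R_n⟩. -/
open MeasureTheory Complex Real ComplexConjugate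

noncomputable section

/-- The constant `c_n = (−1)^n·4πi·(2i)^{−w−1}·C(w,n)`. -/
def cconst (w n : ℕ) : ℂ :=
  (-1) ^ n * 4 * Real.pi * Complex.I * (2 * Complex.I) ^ (-(w : ℤ) - 1) * (w.choose n)

/-- `R_n(z) = c_n^{−1} Σ_{(a b; c d) ∈ Γ₀(N)} 1/((az+b)^{ñ+1}(cz+d)^{n+1})`. -/
def Rq (N w n : ℕ) (z : ℂ) : ℂ :=
  (cconst w n)⁻¹ * ∑' p : {p : ℤ × ℤ × ℤ × ℤ //
      p.1 * p.2.2.2 - p.2.1 * p.2.2.1 = 1 ∧ (N : ℤ) ∣ p.2.2.1},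
    1 / (((p.1.1 : ℂ) * z + (p.1.2.1 : ℂ)) ^ (w - n + 1) *
        ((p.1.2.2.1 : ℂ) * z + (p.1.2.2.2 : ℂ)) ^ (n + 1))

/-- Extension of a function on the upper half-plane to `ℂ` (by zero). -/
def toC (f : UpperHalfPlane → ℂ) : ℂ → ℂ :=
  fun z => if h : 0 < z.im then f ⟨z, h⟩ else 0

/-- A measurable fundamental domain `F ⊆ ℍ ⊆ ℂ` for the action of `Γ₀(N)` on the upper
half-plane by fractional linear transformations. -/
def IsFundDom (N : ℕ) (F : Set ℂ) : Prop :=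
  MeasurableSet F ∧ (∀ z ∈ F, 0 < z.im) ∧
    (∀ z : ℂ, 0 < z.im → ∃ a b c d : ℤ, a * d - b * c = 1 ∧ (N : ℤ) ∣ c ∧
      ((a : ℂ) * z + b) / ((c : ℂ) * z + d) ∈ F) ∧
    ∀ z ∈ F, ∀ a b c d : ℤ, a * d - b * c = 1 → (N : ℤ) ∣ c →
      ((a : ℂ) * z + b) / ((c : ℂ) * z + d) ∈ F →
      ((a : ℂ) * z + b) / ((c : ℂ) * z + d) = z

/-- The Petersson inner product `⟨f,g⟩ = ∫_F f(z)·conj(g(z))·(Im z)^w dx dy` relative to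
a fundamental domain `F`. -/
def pet (w : ℕ) (F : Set ℂ) (f g : UpperHalfPlane → ℂ) : ℂ :=
  ∫ z in F, toC f z * conj (toC g z) * ((z.im : ℂ)) ^ w

/-- The period `r_n(f) = ∫₀^{i∞} f(z)·z^n dz` along the positive imaginary axis. -/
def periodInt (n : ℕ) (f : UpperHalfPlane → ℂ) : ℂ :=
  Complex.I * ∫ y in Set.Ioi (0 : ℝ),
    toC f (Complex.I * y) * (Complex.I * y) ^ n

section CuspFormPeriods

open scoped MatrixGroups Manifold
open UpperHalfPlane ModularForm

/-- The squared Euclidean length of the `i`-th row of an integral matrix. -/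
def rowNormSq (γ : SL(2, ℤ)) (i : Fin 2) : ℤ := γ i 0 ^ 2 + γ i 1 ^ 2

/-- The dot product of the rows of an integral matrix. -/
def rowDot (γ : SL(2, ℤ)) : ℤ := γ 0 0 * γ 1 0 + γ 0 1 * γ 1 1

lemma det_expand (γ : SL(2, ℤ)) : γ 0 0 * γ 1 1 - γ 0 1 * γ 1 0 = 1 := by
  have := γ.det_coe
  rwa [Matrix.det_fin_two] at this

lemma SL_mul_apply (γ δ : SL(2, ℤ)) (i j : Fin 2) :
    (γ * δ) i j = γ i 0 * δ 0 j + γ i 1 * δ 1 j := by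
  rw [Matrix.SpecialLinearGroup.coe_mul, Matrix.mul_apply, Fin.sum_univ_two]

lemma rowNormSq_mul (γ : SL(2, ℤ)) :
    rowNormSq γ 0 * rowNormSq γ 1 = 1 + rowDot γ ^ 2 := by
  have h := det_expand γ
  simp only [rowNormSq, rowDot]
  linear_combination (γ 0 0 * γ 1 1 - γ 0 1 * γ 1 0 + 1) * h

lemma row_ne_zero (γ : SL(2, ℤ)) (i : Fin 2) : γ i ≠ 0 := by
  intro h
  have h0 : γ i 0 = 0 := congrFun h 0
  have h1 : γ i 1 = 0 := congrFun h 1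
  have hd := det_expand γ
  fin_cases i <;> simp_all

lemma rowNormSq_pos (γ : SL(2, ℤ)) (i : Fin 2) : 0 < rowNormSq γ i := by
  have : γ i 0 ≠ 0 ∨ γ i 1 ≠ 0 := by
    by_contra! h
    exact row_ne_zero γ i (by ext j; fin_cases j <;> simp [h])
  unfold rowNormSq
  rcases this with h | h <;> positivity

lemma eq_of_lower_row_eq_of_ediv_eq {γ δ : SL(2, ℤ)} (h : γ 1 = δ 1)
    (hdiv : rowDot γ / rowNormSq γ 1 = rowDot δ / rowNormSq δ 1) : γ = δ := by
  have h0 : γ 1 0 = δ 1 0 := congrFun h 0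
  have h1 : γ 1 1 = δ 1 1 := congrFun h 1
  have hγ := det_expand γ
  have hδ := det_expand δ
  have he : rowNormSq γ 1 = rowNormSq δ 1 := by simp [rowNormSq, h0, h1]
  have hpos := rowNormSq_pos δ 1
  set t := γ 0 0 * δ 0 1 - γ 0 1 * δ 0 0 with ht
  have ha : γ 0 0 = δ 0 0 + (-t) * δ 1 0 := by
    rw [h0, h1] at hγ
    linear_combination (-γ 0 0) * hδ + δ 0 0 * hγ
  have hb : γ 0 1 = δ 0 1 + (-t) * δ 1 1 := by
    rw [h0, h1] at hγ
    linear_combination (-γ 0 1) * hδ + δ 0 1 * hγ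
  have hdot : rowDot γ = rowDot δ + (-t) * rowNormSq δ 1 := by
    simp only [rowDot, rowNormSq, h0, h1, ha, hb]; ring
  rw [he, hdot, Int.add_mul_ediv_right _ _ hpos.ne'] at hdiv
  have ht0 : -t = 0 := by linarith
  rw [ht0] at ha hb
  ext i j
  fin_cases i <;> fin_cases j <;> simp_all

lemma norm_sq_le_rowNormSq (γ : SL(2, ℤ)) (i : Fin 2) : ‖γ i‖ ^ 2 ≤ (rowNormSq γ i : ℝ) := by
  rw [EisensteinSeries.norm_eq_max_natAbs]
  simp only [rowNormSq]
  push_cast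
  rcases max_choice ((γ i 0).natAbs) ((γ i 1).natAbs) with h | h <;>
  · rw [← Nat.cast_max, h, Nat.cast_natAbs]
    simp only [Int.cast_abs, sq_abs]
    nlinarith [sq_nonneg (γ i 0 : ℝ), sq_nonneg (γ i 1 : ℝ)]

lemma rowNormSq_le (γ : SL(2, ℤ)) (i : Fin 2) : (rowNormSq γ i : ℝ) ≤ 2 * ‖γ i‖ ^ 2 := by
  have h (j) : ((γ i j : ℤ) : ℝ) ^ 2 ≤ ‖γ i‖ ^ 2 := by
    rw [← sq_abs, ← Int.norm_eq_abs]
    gcongr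
    exact norm_le_pi_norm (γ i) j
  simp only [rowNormSq]
  push_cast
  linarith [h 0, h 1]

lemma summable_one_add_sq_inv : Summable (fun k : ℤ ↦ (1 + (k : ℝ) ^ 2)⁻¹) := by
  have h0 : Summable (fun k : ℤ ↦ if k = 0 then (1 : ℝ) else 0) :=
    summable_of_hasFiniteSupport ((Set.finite_singleton 0).subset (fun k hk ↦ by simpa using hk))
  refine Summable.of_nonneg_of_le (fun _ ↦ by positivity) (fun k ↦ ?_)
    (((Real.summable_one_div_int_pow (p := 2)).mpr one_lt_two).add h0)
  by_cases hk : k = 0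
  · simp [hk]
  · have : (0 : ℝ) < (k : ℝ) ^ 2 := by positivity
    simp only [hk, if_false, add_zero, one_div]
    gcongr
    linarith

lemma summable_indicator_rowNormSq :
    Summable (fun γ : SL(2, ℤ) ↦ if rowNormSq γ 1 ≤ rowNormSq γ 0 then
      ((rowNormSq γ 0 : ℝ) * rowNormSq γ 1)⁻¹ else 0) := by
  have hG : Summable (fun p : (Fin 2 → ℤ) × ℤ ↦
      (‖p.1‖ ^ (-4 : ℝ)) * (5 * (1 + (p.2 : ℝ) ^ 2)⁻¹)) :=
    Summable.mul_of_nonneg (f := fun v : Fin 2 → ℤ ↦ ‖v‖ ^ (-4 : ℝ))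
      (g := fun k : ℤ ↦ 5 * (1 + (k : ℝ) ^ 2)⁻¹)
      (EisensteinSeries.summable_one_div_norm_rpow (by norm_num))
      (summable_one_add_sq_inv.mul_left 5) (fun _ ↦ by positivity) (fun _ ↦ by positivity)
  have hinj : Function.Injective
      (fun γ : SL(2, ℤ) ↦ ((γ 1, rowDot γ / rowNormSq γ 1) : (Fin 2 → ℤ) × ℤ)) := by
    intro γ δ h
    simp only [Prod.mk.injEq] at h
    exact eq_of_lower_row_eq_of_ediv_eq h.1 h.2
  refine Summable.of_nonneg_of_le (fun γ ↦ ?_) (fun γ ↦ ?_) (hG.comp_injective hinj)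
  · have := rowNormSq_pos γ 0
    have := rowNormSq_pos γ 1
    split_ifs <;> positivity
  · simp only [Function.comp_apply]
    split_ifs with hle
    swap
    · positivity
    have e0 : (0 : ℝ) < rowNormSq γ 0 := by exact_mod_cast rowNormSq_pos γ 0
    have e1 : (0 : ℝ) < rowNormSq γ 1 := by exact_mod_cast rowNormSq_pos γ 1
    have hprod : (rowNormSq γ 0 : ℝ) * rowNormSq γ 1 = 1 + (rowDot γ : ℝ) ^ 2 := by
      exact_mod_cast rowNormSq_mul γ
    have hle' : (rowNormSq γ 1 : ℝ) ≤ rowNormSq γ 0 := by exact_mod_cast hle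
    have h1 : ((rowDot γ / rowNormSq γ 1 : ℤ) : ℝ) * rowNormSq γ 1 ≤ rowDot γ := by
      exact_mod_cast Int.ediv_mul_le _ (rowNormSq_pos γ 1).ne'
    have h2 : (rowDot γ : ℝ) ≤ (((rowDot γ / rowNormSq γ 1 : ℤ) : ℝ) + 1) * rowNormSq γ 1 := by
      exact_mod_cast (Int.lt_ediv_add_one_mul_self _ (rowNormSq_pos γ 1)).le
    have hn := norm_sq_le_rowNormSq γ 1
    have hn0 : 0 < ‖γ 1‖ := norm_pos_iff.mpr (row_ne_zero γ 1)
    set k : ℝ := ((rowDot γ / rowNormSq γ 1 : ℤ) : ℝ)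
    set m : ℝ := (rowDot γ : ℝ)
    set e : ℝ := (rowNormSq γ 1 : ℝ)
    rw [show (-4 : ℝ) = -((4 : ℕ) : ℝ) by norm_num, Real.rpow_neg hn0.le, Real.rpow_natCast,
      hprod, show (‖γ 1‖ ^ 4)⁻¹ * (5 * (1 + k ^ 2)⁻¹) = 5 / (‖γ 1‖ ^ 4 * (1 + k ^ 2)) by
        field_simp, inv_eq_one_div, div_le_div_iff₀ (by positivity) (by positivity), one_mul]
    have h4 : ‖γ 1‖ ^ 4 ≤ e ^ 2 := by
      calc ‖γ 1‖ ^ 4 = (‖γ 1‖ ^ 2) ^ 2 := by ring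
        _ ≤ e ^ 2 := by gcongr
    have h5 : e ^ 2 ≤ 1 + m ^ 2 := by nlinarith
    have h6 : (k * e) ^ 2 ≤ 2 * m ^ 2 + 2 * e ^ 2 := by
      have : (m - k * e) ^ 2 ≤ e ^ 2 := by nlinarith
      nlinarith [sq_nonneg (2 * m - k * e)]
    calc ‖γ 1‖ ^ 4 * (1 + k ^ 2) ≤ e ^ 2 * (1 + k ^ 2) := by gcongr
      _ ≤ 5 * (1 + m ^ 2) := by nlinarith

lemma summable_rowNormSq :
    Summable (fun γ : SL(2, ℤ) ↦ ((rowNormSq γ 0 : ℝ) * rowNormSq γ 1)⁻¹) := by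
  have h := summable_indicator_rowNormSq
  have h' := h.comp_injective (mul_right_injective ModularGroup.S)
  refine Summable.of_nonneg_of_le (fun γ ↦ ?_) (fun γ ↦ ?_) (h.add h')
  · have := rowNormSq_pos γ 0
    have := rowNormSq_pos γ 1
    positivity
  · have e0 := rowNormSq_pos γ 0
    have e1 := rowNormSq_pos γ 1
    have s0 : rowNormSq (ModularGroup.S * γ) 0 = rowNormSq γ 1 := by
      simp only [rowNormSq, SL_mul_apply]
      simp [ModularGroup.S]
    have s1 : rowNormSq (ModularGroup.S * γ) 1 = rowNormSq γ 0 := by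
      simp only [rowNormSq, SL_mul_apply]
      simp [ModularGroup.S]
    simp only [Function.comp_apply, s0, s1]
    have hp : (0 : ℝ) ≤ ((rowNormSq γ 0 : ℝ) * rowNormSq γ 1)⁻¹ := by positivity
    rw [mul_comm (rowNormSq γ 1 : ℝ)]
    split_ifs <;> linarith

lemma summable_norm_rows :
    Summable (fun γ : SL(2, ℤ) ↦ (‖γ 0‖ ^ 2 * ‖γ 1‖ ^ 2)⁻¹) := by
  refine Summable.of_nonneg_of_le (fun γ ↦ by positivity) (fun γ ↦ ?_)
    (summable_rowNormSq.mul_left 4)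
  have e0 : (0 : ℝ) < rowNormSq γ 0 := by exact_mod_cast rowNormSq_pos γ 0
  have e1 : (0 : ℝ) < rowNormSq γ 1 := by exact_mod_cast rowNormSq_pos γ 1
  have h0 : 0 < ‖γ 0‖ := norm_pos_iff.mpr (row_ne_zero γ 0)
  have h1 : 0 < ‖γ 1‖ := norm_pos_iff.mpr (row_ne_zero γ 1)
  rw [← div_eq_mul_inv, inv_eq_one_div, div_le_div_iff₀ (by positivity) (by positivity)]
  have := mul_le_mul (rowNormSq_le γ 0) (rowNormSq_le γ 1) e1.le (by positivity)
  linarith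

/-- The term of the series `R_n` attached to an integral matrix. -/
def kerTerm (p q : ℕ) (γ : SL(2, ℤ)) (z : ℂ) : ℂ :=
  1 / ((γ 0 0 * z + γ 0 1) ^ (p + 1) * (γ 1 0 * z + γ 1 1) ^ (q + 1))

lemma row_smul_mul_denom (γ δ : SL(2, ℤ)) (i : Fin 2) (τ : ℍ) :
    ((γ * δ) i 0 * (τ : ℂ) + (γ * δ) i 1) =
      (γ i 0 * ((δ • τ : ℍ) : ℂ) + γ i 1) * (δ 1 0 * (τ : ℂ) + δ 1 1) := by
  have h : (δ 1 0 * (τ : ℂ) + δ 1 1) ≠ 0 := by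
    have := denom_ne_zero δ τ
    simpa [ModularGroup.denom_apply] using this
  have hc : ((δ • τ : ℍ) : ℂ) = (δ 0 0 * (τ : ℂ) + δ 0 1) / (δ 1 0 * (τ : ℂ) + δ 1 1) := by
    rw [UpperHalfPlane.coe_specialLinearGroup_apply]
    simp
  rw [hc, SL_mul_apply, SL_mul_apply]
  push_cast
  field_simp
  ring

lemma kerTerm_slash (p q : ℕ) (γ δ : SL(2, ℤ)) (τ : ℍ) :
    kerTerm p q γ ((δ • τ : ℍ) : ℂ) * denom δ τ ^ (-((p : ℤ) + q + 2)) =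
      kerTerm p q (γ * δ) τ := by
  have h : (δ 1 0 * (τ : ℂ) + δ 1 1) ≠ 0 := by
    have := denom_ne_zero δ τ
    simpa [ModularGroup.denom_apply] using this
  have hd : denom δ τ = (δ 1 0 * (τ : ℂ) + δ 1 1) := by
    simp [ModularGroup.denom_apply]
  rw [kerTerm, kerTerm, row_smul_mul_denom, row_smul_mul_denom, hd, mul_pow, mul_pow, zpow_neg]
  have e : ((p : ℤ) + q + 2) = ((p + 1 + (q + 1) : ℕ) : ℤ) := by push_cast; ring
  rw [e, zpow_natCast, pow_add, one_div, one_div, ← mul_inv]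
  congr 1
  ring

lemma one_le_norm_row (γ : SL(2, ℤ)) (i : Fin 2) : 1 ≤ ‖γ i‖ := by
  by_contra! h
  apply row_ne_zero γ i
  funext j
  have : ‖γ i j‖ < 1 := (norm_le_pi_norm (γ i) j).trans_lt h
  rw [Int.norm_eq_abs] at this
  have h2 : |γ i j| < 1 := by exact_mod_cast this
  simpa using Int.abs_lt_one_iff.mp h2

lemma norm_kerTerm_le {p q : ℕ} (hp : 1 ≤ p) (hq : 1 ≤ q) (γ : SL(2, ℤ)) {A B : ℝ} (hB : 0 < B)
    {τ : ℍ} (hτ : τ ∈ verticalStrip A B) :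
    ‖kerTerm p q γ τ‖ ≤ ((EisensteinSeries.r ⟨⟨A, B⟩, hB⟩) ^ (p + q + 2))⁻¹ *
      (‖γ 0‖ ^ 2 * ‖γ 1‖ ^ 2)⁻¹ := by
  set r := EisensteinSeries.r ⟨⟨A, B⟩, hB⟩
  have hr : 0 < r := EisensteinSeries.r_pos _
  have key (i : Fin 2) : r * ‖γ i‖ ≤ ‖γ i 0 * (τ : ℂ) + γ i 1‖ :=
    (mul_le_mul_of_nonneg_right (EisensteinSeries.r_lower_bound_on_verticalStrip τ hB hτ)
      (norm_nonneg _)).trans (EisensteinSeries.r_mul_max_le τ (row_ne_zero γ i))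
  have h0 := one_le_norm_row γ 0
  have h1 := one_le_norm_row γ 1
  rw [kerTerm, norm_div, norm_one, norm_mul, norm_pow, norm_pow, one_div, ← mul_inv]
  apply inv_anti₀ (by positivity)
  calc r ^ (p + q + 2) * (‖γ 0‖ ^ 2 * ‖γ 1‖ ^ 2)
      ≤ r ^ (p + q + 2) * (‖γ 0‖ ^ (p + 1) * ‖γ 1‖ ^ (q + 1)) := by
        gcongr <;> first | assumption | omega
    _ = (r * ‖γ 0‖) ^ (p + 1) * (r * ‖γ 1‖) ^ (q + 1) := by ring
    _ ≤ _ := by gcongr <;> exact key _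

lemma mem_verticalStrip_self (τ : ℍ) : τ ∈ verticalStrip |τ.re| τ.im := ⟨le_rfl, le_rfl⟩

lemma summable_norm_kerTerm {p q : ℕ} (hp : 1 ≤ p) (hq : 1 ≤ q) (τ : ℍ) :
    Summable (fun γ : SL(2, ℤ) ↦ ‖kerTerm p q γ τ‖) :=
  Summable.of_nonneg_of_le (fun _ ↦ norm_nonneg _)
    (fun γ ↦ norm_kerTerm_le hp hq γ τ.im_pos (mem_verticalStrip_self τ))
    (summable_norm_rows.mul_left _)

lemma norm_kerTerm_le_inv_im (p q : ℕ) (γ : SL(2, ℤ)) {τ : ℍ} (hτ : 1 ≤ τ.im) :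
    ‖kerTerm p q γ τ‖ ≤ 1 / τ.im := by
  have him (i : Fin 2) (h : γ i 0 ≠ 0) : τ.im ≤ ‖γ i 0 * (τ : ℂ) + γ i 1‖ := by
    calc τ.im ≤ |(γ i 0 : ℝ)| * τ.im := by
          have : (1 : ℝ) ≤ |(γ i 0 : ℝ)| := by exact_mod_cast Int.one_le_abs h
          nlinarith
      _ = |((γ i 0 * (τ : ℂ) + γ i 1)).im| := by
          simp [abs_mul, abs_of_pos τ.im_pos]
      _ ≤ _ := abs_im_le_norm _
  have hone (i : Fin 2) : 1 ≤ ‖γ i 0 * (τ : ℂ) + γ i 1‖ := by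
    by_cases h : γ i 0 = 0
    · have h1 : γ i 1 ≠ 0 := by
        intro h1; apply row_ne_zero γ i; funext j; fin_cases j <;> simp_all
      rw [h]
      simp only [Int.cast_zero, zero_mul, zero_add, Complex.norm_intCast]
      exact_mod_cast Int.one_le_abs h1
    · exact hτ.trans (him i h)
  have hor : γ 0 0 ≠ 0 ∨ γ 1 0 ≠ 0 := by
    by_contra! h
    have := det_expand γ
    rw [h.1, h.2] at this
    simp at this
  rw [kerTerm, norm_div, norm_one, norm_mul, norm_pow, norm_pow]
  apply one_div_le_one_div_of_le τ.im_pos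
  have a0 := hone 0
  have a1 := hone 1
  rcases hor with h | h
  · calc τ.im ≤ ‖γ 0 0 * (τ : ℂ) + γ 0 1‖ ^ 1 * 1 := by simpa using him 0 h
      _ ≤ _ := mul_le_mul (pow_le_pow_right₀ a0 (by omega)) (one_le_pow₀ a1) zero_le_one
        (by positivity)
  · calc τ.im ≤ 1 * ‖γ 1 0 * (τ : ℂ) + γ 1 1‖ ^ 1 := by simpa using him 1 h
      _ ≤ _ := mul_le_mul (one_le_pow₀ a0) (pow_le_pow_right₀ a1 (by omega)) (by positivity)
        (by positivity)

/-- The Poincaré-type series over a subgroup of the modular group. -/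
def kerSeries (Γ : Subgroup SL(2, ℤ)) (p q : ℕ) (z : ℂ) : ℂ := ∑' γ : Γ, kerTerm p q γ z

lemma kerSeries_slash (Γ : Subgroup SL(2, ℤ)) (p q : ℕ) (δ : SL(2, ℤ)) (τ : ℍ) :
    ((fun τ : ℍ ↦ kerSeries Γ p q τ) ∣[(p + q + 2 : ℤ)] δ) τ =
      ∑' γ : Γ, kerTerm p q ((γ : SL(2, ℤ)) * δ) τ := by
  rw [ModularForm.SL_slash_apply]
  simp only [kerSeries]
  rw [← tsum_mul_right]
  exact tsum_congr fun γ ↦ kerTerm_slash p q γ δ τ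

lemma kerSeries_slash_mem (Γ : Subgroup SL(2, ℤ)) (p q : ℕ) {δ : SL(2, ℤ)} (hδ : δ ∈ Γ) :
    ((fun τ : ℍ ↦ kerSeries Γ p q τ) ∣[(p + q + 2 : ℤ)] δ) = fun τ : ℍ ↦ kerSeries Γ p q τ := by
  funext τ
  rw [kerSeries_slash, kerSeries]
  exact (Equiv.mulRight (⟨δ, hδ⟩ : Γ)).tsum_eq (fun γ : Γ ↦ kerTerm p q γ τ)

lemma kerSeries_mdifferentiable (Γ : Subgroup SL(2, ℤ)) {p q : ℕ} (hp : 1 ≤ p) (hq : 1 ≤ q) :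
    MDiff (fun τ : ℍ ↦ kerSeries Γ p q τ) := by
  rw [UpperHalfPlane.mdifferentiable_iff]
  have hdiff : DifferentiableOn ℂ (kerSeries Γ p q) {z : ℂ | 0 < z.im} := by
    intro z hz
    set A := |z.re| + 1
    set B := z.im / 2
    have hB : 0 < B := half_pos hz
    set U : Set ℂ := {z : ℂ | |z.re| < A} ∩ {z : ℂ | B < z.im}
    have hU : IsOpen U := (isOpen_lt (by fun_prop) (by fun_prop)).inter
      (isOpen_lt (by fun_prop) (by fun_prop))
    have hzU : z ∈ U := ⟨by simp [A], half_lt_self (show 0 < z.im from hz)⟩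
    refine DifferentiableAt.differentiableWithinAt ?_
    have := Complex.differentiableOn_tsum_of_summable_norm
      (F := fun (γ : Γ) (z : ℂ) ↦ kerTerm p q γ z) (U := U)
      ((summable_norm_rows.mul_left
        (((EisensteinSeries.r ⟨⟨A, B⟩, hB⟩) ^ (p + q + 2))⁻¹)).subtype (Γ : Set SL(2, ℤ)))
      (fun γ u hu ↦ ?_) hU (fun γ u hu ↦ ?_)
    · exact (this.differentiableAt (hU.mem_nhds hzU))
    · have hpos : 0 < u.im := hB.trans hu.2
      have key (i : Fin 2) : ((γ : SL(2, ℤ)) i 0 * u + (γ : SL(2, ℤ)) i 1) ≠ 0 := by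
        have h := EisensteinSeries.r_mul_max_le ⟨u, hpos⟩ (row_ne_zero γ i)
        have h' := (mul_pos (EisensteinSeries.r_pos ⟨u, hpos⟩)
          (norm_pos_iff.mpr (row_ne_zero γ i))).trans_le h
        exact norm_pos_iff.mp h'
      simp only [kerTerm]
      refine DifferentiableAt.differentiableWithinAt ?_
      refine DifferentiableAt.div (by fun_prop) (by fun_prop) ?_
      exact mul_ne_zero (pow_ne_zero _ (key 0)) (pow_ne_zero _ (key 1))
    · have hpos : 0 < u.im := hB.trans hu.2
      exact norm_kerTerm_le hp hq γ hB (τ := ⟨u, hpos⟩) ⟨hu.1.le, hu.2.le⟩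
  refine hdiff.congr fun z hz ↦ ?_
  simp [Function.comp, UpperHalfPlane.ofComplex_apply_of_im_pos hz]

lemma tsum_norm_kerTerm_T_zpow (p q : ℕ) (n : ℤ) (τ : ℍ) :
    ∑' γ : SL(2, ℤ), ‖kerTerm p q γ ((ModularGroup.T ^ n • τ : ℍ) : ℂ)‖ =
      ∑' γ : SL(2, ℤ), ‖kerTerm p q γ τ‖ := by
  rw [← (Equiv.mulRight (ModularGroup.T ^ n : SL(2, ℤ))).tsum_eq
    (fun γ : SL(2, ℤ) ↦ ‖kerTerm p q γ τ‖)]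
  refine tsum_congr fun γ ↦ ?_
  have hd : denom (ModularGroup.T ^ n : SL(2, ℤ)) τ = 1 := by
    rw [ModularGroup.denom_apply, ModularGroup.coe_T_zpow]
    simp
  rw [Equiv.coe_mulRight, ← kerTerm_slash, hd, one_zpow, mul_one]

lemma tsum_norm_kerTerm_isZeroAtImInfty {p q : ℕ} (hp : 1 ≤ p) (hq : 1 ≤ q) :
    IsZeroAtImInfty (fun τ : ℍ ↦ ∑' γ : SL(2, ℤ), ‖kerTerm p q γ τ‖) := by
  rw [isZeroAtImInfty_iff]
  intro ε hε
  have hlim : Filter.Tendsto (fun τ : ℍ ↦ ∑' γ : SL(2, ℤ), ‖kerTerm p q γ τ‖)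
      (atImInfty ⊓ Filter.principal (verticalStrip 1 1)) (nhds (∑' _ : SL(2, ℤ), 0)) := by
    refine tendsto_tsum_of_dominated_convergence
      (summable_norm_rows.mul_left
        (((EisensteinSeries.r ⟨⟨1, 1⟩, one_pos⟩) ^ (p + q + 2))⁻¹)) (fun γ ↦ ?_) ?_
    · have him : Filter.Tendsto (fun τ : ℍ ↦ 1 / τ.im)
          (atImInfty ⊓ Filter.principal (verticalStrip 1 1)) (nhds 0) := by
        simp only [one_div]
        exact tendsto_inv_atTop_zero.comp (Filter.tendsto_comap.mono_left inf_le_left)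
      refine squeeze_zero' (Filter.Eventually.of_forall fun _ ↦ norm_nonneg _) ?_ him
      filter_upwards [Filter.mem_inf_of_right (Filter.mem_principal_self _)] with τ hτ
      exact norm_kerTerm_le_inv_im p q γ hτ.2
    · filter_upwards [Filter.mem_inf_of_right (Filter.mem_principal_self _)] with τ hτ γ
      rw [norm_norm]
      exact norm_kerTerm_le hp hq γ one_pos hτ
  rw [tsum_zero] at hlim
  have hev := hlim.eventually (gt_mem_nhds hε)
  rw [Filter.eventually_inf_principal] at hev
  obtain ⟨Y, hY⟩ := (atImInfty_mem _).mp hev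
  refine ⟨max Y 1, fun τ hτ ↦ ?_⟩
  obtain ⟨n, hn⟩ := ModularGroup_T_zpow_mem_verticalStrip τ (N := 1) one_pos

  rw [Real.norm_of_nonneg (tsum_nonneg fun _ ↦ norm_nonneg _),
    ← tsum_norm_kerTerm_T_zpow p q ((1 : ℕ) * n) τ]
  refine (hY (ModularGroup.T ^ (((1 : ℕ) : ℤ) * n) • τ) ?_ ?_).le
  · rw [ModularGroup.im_T_zpow_smul]; exact (le_max_left _ _).trans hτ
  · refine ⟨by simpa using hn.1, ?_⟩
    rw [ModularGroup.im_T_zpow_smul]; exact (le_max_right _ _).trans hτ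

lemma kerSeries_slash_isZeroAtImInfty (Γ : Subgroup SL(2, ℤ)) {p q : ℕ} (hp : 1 ≤ p)
    (hq : 1 ≤ q) (δ : SL(2, ℤ)) :
    IsZeroAtImInfty ((fun τ : ℍ ↦ kerSeries Γ p q τ) ∣[(p + q + 2 : ℤ)] δ) := by
  rw [isZeroAtImInfty_iff]
  intro ε hε
  obtain ⟨A, hA⟩ := (isZeroAtImInfty_iff.mp (tsum_norm_kerTerm_isZeroAtImInfty hp hq)) ε hε
  refine ⟨A, fun τ hτ ↦ ?_⟩
  refine le_trans ?_ ((le_abs_self _).trans (hA τ hτ))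
  rw [kerSeries_slash]
  have hs := summable_norm_kerTerm hp hq τ
  have hinj : Function.Injective (fun γ : Γ ↦ (γ : SL(2, ℤ)) * δ) := fun a b h ↦
    Subtype.ext (mul_right_cancel h)
  have hs' := hs.comp_injective hinj
  exact (norm_tsum_le_tsum_norm hs').trans
    (tsum_comp_le_tsum_of_inj hs (fun _ ↦ norm_nonneg _) hinj)

/-- The series `R_n` as a bundled cusp form. -/
def kerCuspForm (N w p q : ℕ) [NeZero N] (hp : 1 ≤ p) (hq : 1 ≤ q) (hw : p + q = w) (c : ℂ) :
    CuspForm (CongruenceSubgroup.Gamma0 N) (w + 2) where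
  toFun := c • fun τ : ℍ ↦ kerSeries (CongruenceSubgroup.Gamma0 N) p q τ
  slash_action_eq' := by
    rintro _ ⟨δ, hδ, rfl⟩
    have h := kerSeries_slash_mem (CongruenceSubgroup.Gamma0 N) p q hδ
    subst hw
    push_cast
    change (c • _) ∣[(p + q + 2 : ℤ)] δ = _
    rw [ModularForm.SL_smul_slash, h]
  holo' := (kerSeries_mdifferentiable _ hp hq).const_smul c
  zero_at_cusps' hc := by
    rw [Subgroup.IsArithmetic.isCusp_iff_isCusp_SL2Z] at hc
    rw [OnePoint.isZeroAt_iff_forall_SL2Z hc]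
    intro δ _
    subst hw
    push_cast
    rw [ModularForm.SL_smul_slash]
    exact (kerSeries_slash_isZeroAtImInfty _ hp hq δ).smul c

lemma measurePreserving_coe : MeasurePreserving UpperHalfPlane.coe
    ((volume : Measure ℂ).comap UpperHalfPlane.coe)
    ((volume : Measure ℂ).restrict {z | 0 < z.im}) := by
  refine ⟨measurable_coe, ?_⟩
  rw [measurableEmbedding_coe.map_comap]
  congr 1
  ext z
  exact ⟨fun ⟨τ, h⟩ ↦ h ▸ τ.im_pos, fun h ↦ ⟨⟨z, h⟩, rfl⟩⟩

lemma measurable_one_div_im_sq :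
    Measurable fun z : ℍ ↦ ((1 / NNReal.mk z.im z.im_pos.le : NNReal) ^ 2) := by
  refine Measurable.pow_const (Measurable.const_div ?_ _) _
  exact (Complex.measurable_im.comp measurable_coe).subtype_mk

lemma setIntegral_upperHalfPlane (Φ : ℂ → ℂ) {F : Set ℂ} (hF : MeasurableSet F)
    (hF' : F ⊆ {z | 0 < z.im}) :
    ∫ τ : ℍ in UpperHalfPlane.coe ⁻¹' F, Φ τ = ∫ z in F, ((1 / z.im ^ 2 : ℝ) : ℂ) * Φ z := by
  rw [volume_def, restrict_withDensity (measurable_coe hF),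
    integral_withDensity_eq_integral_smul measurable_one_div_im_sq]
  have := measurePreserving_coe.setIntegral_preimage_emb measurableEmbedding_coe
    (fun z ↦ ((1 / z.im ^ 2 : ℝ) : ℂ) * Φ z) F
  rw [Measure.restrict_restrict hF, Set.inter_eq_self_of_subset_left hF'] at this
  rw [← this]
  refine integral_congr_ae (Filter.Eventually.of_forall fun τ ↦ ?_)
  simp [NNReal.smul_def]

lemma integrable_upperHalfPlane {Φ : ℂ → ℂ}
    (h : IntegrableOn (fun z : ℂ ↦ ((1 / z.im ^ 2 : ℝ) : ℂ) * Φ z) {z | 0 < z.im}) :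
    Integrable (fun τ : ℍ ↦ Φ τ) := by
  rw [volume_def, integrable_withDensity_iff_integrable_smul measurable_one_div_im_sq]
  have := (measurePreserving_coe.integrable_comp_emb measurableEmbedding_coe
    (g := fun z ↦ ((1 / z.im ^ 2 : ℝ) : ℂ) * Φ z)).mpr h
  refine this.congr (Filter.Eventually.of_forall fun τ ↦ ?_)
  simp [NNReal.smul_def]

instance : NullSingletonClass (volume : Measure ℍ) := ⟨fun τ ↦ by
  rw [volume_eq_lintegral, Set.image_singleton]
  simp⟩

instance : SMulInvariantMeasure SL(2, ℤ) ℍ volume := ⟨fun γ _ hs ↦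
  SMulInvariantMeasure.measure_preimage_smul (M := GL (Fin 2) ℝ) (μ := volume) (γ : GL (Fin 2) ℝ) hs⟩

instance : MeasurableConstSMul SL(2, ℤ) ℍ := ⟨fun γ ↦
  (inferInstance : MeasurableConstSMul (GL (Fin 2) ℝ) ℍ).measurable_const_smul (γ : GL (Fin 2) ℝ)⟩

lemma smul_eq_self_iff (γ : SL(2, ℤ)) (τ : ℍ) : γ • τ = τ ↔
    (γ 0 0 * (τ : ℂ) + γ 0 1) = τ * (γ 1 0 * (τ : ℂ) + γ 1 1) := by
  have h : (γ 1 0 * (τ : ℂ) + γ 1 1) ≠ 0 := by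
    have := denom_ne_zero γ τ
    simpa [ModularGroup.denom_apply] using this
  rw [← UpperHalfPlane.coe_inj, UpperHalfPlane.coe_specialLinearGroup_apply]
  simp only [algebraMap_int_eq, eq_intCast, ofReal_intCast]
  rw [div_eq_iff h]

lemma fixedPoints_subsingleton {γ : SL(2, ℤ)} (h1 : γ ≠ 1) (h2 : γ ≠ -1) :
    {τ : ℍ | γ • τ = τ}.Subsingleton := by
  have key (τ : ℍ) (h : γ • τ = τ) : (γ 1 0 : ℝ) ≠ 0 ∧
      2 * (γ 1 0 : ℝ) * τ.re = γ 0 0 - γ 1 1 ∧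
      (γ 1 0 : ℝ) * (τ.re ^ 2 - τ.im ^ 2) + (γ 1 1 - γ 0 0) * τ.re = γ 0 1 := by
    rw [smul_eq_self_iff] at h
    have hre := congrArg Complex.re h
    have him := congrArg Complex.im h
    simp at hre him
    have hy := τ.im_pos
    have e1 : 2 * (γ 1 0 : ℝ) * τ.re = γ 0 0 - γ 1 1 := by
      apply mul_right_cancel₀ hy.ne'
      linarith
    refine ⟨fun h0 ↦ ?_, e1, by linarith⟩
    rw [h0] at e1 hre
    have hc : γ 1 0 = 0 := by exact_mod_cast h0
    have hda : γ 0 0 = γ 1 1 := by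
      have : (γ 0 0 : ℝ) = γ 1 1 := by linarith
      exact_mod_cast this
    have hb : γ 0 1 = 0 := by
      rw [hda] at hre
      have : (γ 0 1 : ℝ) = 0 := by linarith
      exact_mod_cast this
    have hdet := det_expand γ
    rw [hc, hda, hb] at hdet
    have hor : γ 1 1 = 1 ∨ γ 1 1 = -1 := mul_self_eq_one_iff.mp (by linarith)
    rcases hor with h | h
    · apply h1; ext i j; fin_cases i <;> fin_cases j <;> simp_all
    · apply h2; ext i j; fin_cases i <;> fin_cases j <;> simp_all
  intro τ hτ σ hσ
  obtain ⟨a, b, c⟩ := key τ hτ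
  obtain ⟨_, b', c'⟩ := key σ hσ
  have hre : τ.re = σ.re := by
    have : 2 * (γ 1 0 : ℝ) * τ.re = 2 * (γ 1 0 : ℝ) * σ.re := b.trans b'.symm
    exact mul_left_cancel₀ (by positivity) this
  have him : τ.im = σ.im := by
    rw [hre] at c
    have : (γ 1 0 : ℝ) * τ.im ^ 2 = γ 1 0 * σ.im ^ 2 := by linarith
    have := mul_left_cancel₀ a this
    exact (pow_left_inj₀ τ.im_pos.le σ.im_pos.le two_ne_zero).mp this
  exact UpperHalfPlane.ext (Complex.ext hre him)

instance : Countable SL(2, ℤ) :=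
  have : Countable (Matrix (Fin 2) (Fin 2) ℤ) := inferInstanceAs (Countable (Fin 2 → Fin 2 → ℤ))
  Subtype.countable

lemma ae_trivial_stabilizer :
    ∀ᵐ τ : ℍ, ∀ γ : SL(2, ℤ), γ • τ = τ → γ = 1 ∨ γ = -1 := by
  rw [ae_all_iff]
  intro γ
  by_cases h : γ = 1 ∨ γ = -1
  · exact Filter.Eventually.of_forall fun _ _ ↦ h
  · push Not at h
    have := (fixedPoints_subsingleton h.1 h.2).measure_zero volume
    rw [measure_eq_zero_iff_ae_notMem] at this
    filter_upwards [this] with τ hτ h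
    exact absurd h hτ

lemma ae_exists_finset_translates {Γ : Subgroup SL(2, ℤ)} (hΓ : -1 ∈ Γ) {D : Set ℍ}
    (hD1 : ∀ τ : ℍ, ∃ γ ∈ Γ, γ • τ ∈ D)
    (hD2 : ∀ τ ∈ D, ∀ γ ∈ Γ, γ • τ ∈ D → γ • τ = τ) :
    ∀ᵐ τ : ℍ, ∃ s : Finset Γ, s.card = 2 ∧ ∀ γ : Γ, (γ : SL(2, ℤ))⁻¹ • τ ∈ D ↔ γ ∈ s := by
  classical
  filter_upwards [ae_trivial_stabilizer] with τ hτ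
  obtain ⟨γ₀, hγ₀, hmem⟩ := hD1 τ
  have hneg (γ : SL(2, ℤ)) (σ : ℍ) : (-γ) • σ = γ • σ := ModularGroup.SL_neg_smul γ σ
  have hm : -γ₀⁻¹ ∈ Γ := by
    rw [← neg_one_mul]; exact Γ.mul_mem hΓ (Γ.inv_mem hγ₀)
  refine ⟨{⟨γ₀⁻¹, Γ.inv_mem hγ₀⟩, ⟨-γ₀⁻¹, hm⟩}, Finset.card_pair fun h ↦ ?_, fun γ ↦ ?_⟩
  · have h' : γ₀⁻¹ = -γ₀⁻¹ := congrArg Subtype.val h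
    have h0 := congrArg (fun A : SL(2, ℤ) ↦ A 0) h'
    apply row_ne_zero γ₀⁻¹ 0
    funext j
    have := congrFun h0 j
    simp only [Matrix.SpecialLinearGroup.coe_neg, Matrix.neg_apply] at this
    show γ₀⁻¹ 0 j = 0
    have e : (-γ₀⁻¹ : SL(2, ℤ)) 0 j = - γ₀⁻¹ 0 j := rfl
    omega
  · simp only [Finset.mem_insert, Finset.mem_singleton]
    constructor
    · intro h
      have h2 : ((γ : SL(2, ℤ))⁻¹ * γ₀⁻¹) • (γ₀ • τ) = (γ : SL(2, ℤ))⁻¹ • τ := by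
        rw [mul_smul, inv_smul_smul]
      have h3 := hD2 _ hmem _ (Γ.mul_mem (Γ.inv_mem γ.2) (Γ.inv_mem hγ₀)) (by rwa [h2])
      rw [h2] at h3
      have h4 : ((γ : SL(2, ℤ)) * γ₀) • τ = τ := by rw [mul_smul, ← h3, smul_inv_smul]
      rcases hτ _ h4 with h5 | h5
      · left; exact Subtype.ext (eq_inv_of_mul_eq_one_left h5)
      · right; apply Subtype.ext
        show (γ : SL(2, ℤ)) = -γ₀⁻¹
        rw [← neg_one_mul, ← h5, mul_inv_cancel_right]
    · rintro (rfl | rfl)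
      · simpa using hmem
      · have : ((-γ₀⁻¹ : SL(2, ℤ)))⁻¹ = -γ₀ := by
          rw [inv_eq_iff_mul_eq_one]; simp
        show (-γ₀⁻¹ : SL(2, ℤ))⁻¹ • τ ∈ D
        rwa [this, hneg]

section Unfolding

lemma indicator_comp_smul {M : Type*} [Zero M] (D : Set ℍ) (H : ℍ → M) (γ : SL(2, ℤ)) (τ : ℍ) :
    D.indicator (fun τ ↦ H (γ • τ)) τ =
      ((fun τ : ℍ ↦ γ⁻¹ • τ) ⁻¹' D).indicator H (γ • τ) := by
  have hiff : γ • τ ∈ (fun τ : ℍ ↦ γ⁻¹ • τ) ⁻¹' D ↔ τ ∈ D := by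
    rw [Set.mem_preimage, inv_smul_smul]
  by_cases h : τ ∈ D
  · rw [Set.indicator_of_mem h, Set.indicator_of_mem (hiff.mpr h)]
  · rw [Set.indicator_of_notMem h, Set.indicator_of_notMem fun h' ↦ h (hiff.mp h')]

variable {Γ : Subgroup SL(2, ℤ)} {D : Set ℍ}

lemma tsum_indicator_translates {M : Type*} [NonAssocSemiring M] [TopologicalSpace M]
    (H : ℍ → M) {τ : ℍ} {s : Finset Γ} (hs : s.card = 2)
    (h : ∀ γ : Γ, (γ : SL(2, ℤ))⁻¹ • τ ∈ D ↔ γ ∈ s) :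
    ∑' γ : Γ, ((fun τ ↦ (γ : SL(2, ℤ))⁻¹ • τ) ⁻¹' D).indicator H τ = 2 * H τ := by
  have h0 (γ : Γ) (hγ : γ ∉ s) :
      ((fun τ ↦ (γ : SL(2, ℤ))⁻¹ • τ) ⁻¹' D).indicator H τ = 0 :=
    Set.indicator_of_notMem (s := (fun τ ↦ (γ : SL(2, ℤ))⁻¹ • τ) ⁻¹' D) (a := τ)
      (fun h' ↦ hγ ((h γ).mp h')) H
  have h1 (γ : Γ) (hγ : γ ∈ s) :
      ((fun τ ↦ (γ : SL(2, ℤ))⁻¹ • τ) ⁻¹' D).indicator H τ = H τ :=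
    Set.indicator_of_mem (s := (fun τ ↦ (γ : SL(2, ℤ))⁻¹ • τ) ⁻¹' D) (a := τ) ((h γ).mpr hγ) H
  rw [tsum_eq_sum h0, Finset.sum_congr rfl h1]
  simp [hs, two_mul]

lemma tsum_lintegral_translates (hΓ : -1 ∈ Γ) (hD : MeasurableSet D)
    (hD1 : ∀ τ : ℍ, ∃ γ ∈ Γ, γ • τ ∈ D)
    (hD2 : ∀ τ ∈ D, ∀ γ ∈ Γ, γ • τ ∈ D → γ • τ = τ) {H : ℍ → ENNReal} (hH : AEMeasurable H) :
    ∑' γ : Γ, ∫⁻ τ in D, H ((γ : SL(2, ℤ)) • τ) = 2 * ∫⁻ τ, H τ := by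
  have e (γ : Γ) : ∫⁻ τ in D, H ((γ : SL(2, ℤ)) • τ) =
      ∫⁻ τ, ((fun τ ↦ (γ : SL(2, ℤ))⁻¹ • τ) ⁻¹' D).indicator H τ := by
    rw [← lintegral_indicator hD, lintegral_congr (indicator_comp_smul D H γ)]
    exact (measurePreserving_smul (γ : SL(2, ℤ)) (volume : Measure ℍ)).lintegral_comp_emb
      (measurableEmbedding_const_smul _) _
  have hm (γ : Γ) : MeasurableSet ((fun τ : ℍ ↦ (γ : SL(2, ℤ))⁻¹ • τ) ⁻¹' D) :=
    measurable_const_smul (γ : SL(2, ℤ))⁻¹ hD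
  rw [tsum_congr e, ← lintegral_tsum fun γ ↦ hH.indicator (hm γ),
    ← lintegral_const_mul' _ _ (by simp)]
  refine lintegral_congr_ae ?_
  filter_upwards [ae_exists_finset_translates hΓ hD1 hD2] with τ ⟨s, hs, h⟩
  exact tsum_indicator_translates H hs h

lemma setIntegral_tsum_translates (hΓ : -1 ∈ Γ) (hD : MeasurableSet D)
    (hD1 : ∀ τ : ℍ, ∃ γ ∈ Γ, γ • τ ∈ D)
    (hD2 : ∀ τ ∈ D, ∀ γ ∈ Γ, γ • τ ∈ D → γ • τ = τ) {H : ℍ → ℂ} (hH : Integrable H) :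
    ∫ τ in D, ∑' γ : Γ, H ((γ : SL(2, ℤ)) • τ) = 2 * ∫ τ, H τ := by
  have hm (γ : Γ) : MeasurableSet ((fun τ : ℍ ↦ (γ : SL(2, ℤ))⁻¹ • τ) ⁻¹' D) :=
    measurable_const_smul (γ : SL(2, ℤ))⁻¹ hD
  have hmp (γ : Γ) := measurePreserving_smul (γ : SL(2, ℤ)) (volume : Measure ℍ)
  have hemb (γ : Γ) : MeasurableEmbedding fun τ : ℍ ↦ (γ : SL(2, ℤ)) • τ :=
    measurableEmbedding_const_smul _
  have hfin : ∑' γ : Γ, ∫⁻ τ in D, ‖H ((γ : SL(2, ℤ)) • τ)‖ₑ ≠ ⊤ := by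
    rw [tsum_lintegral_translates hΓ hD hD1 hD2 hH.1.enorm]
    exact ENNReal.mul_ne_top (by simp) hH.2.ne
  have hi (γ : Γ) : ∫ τ in D, H ((γ : SL(2, ℤ)) • τ) =
      ∫ τ, ((fun τ ↦ (γ : SL(2, ℤ))⁻¹ • τ) ⁻¹' D).indicator H τ := by
    rw [← integral_indicator hD]
    simp_rw [indicator_comp_smul D H (γ : SL(2, ℤ))]
    exact (hmp γ).integral_comp (hemb γ) _
  have hfin' : ∑' γ : Γ, ∫⁻ τ, ‖((fun τ ↦ (γ : SL(2, ℤ))⁻¹ • τ) ⁻¹' D).indicator H τ‖ₑ ≠ ⊤ := by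
    convert hfin using 3 with γ
    rw [← lintegral_indicator hD, lintegral_congr (indicator_comp_smul D (fun τ ↦ ‖H τ‖ₑ) γ),
      (hmp γ).lintegral_comp_emb (hemb γ)]
    exact lintegral_congr fun τ ↦ enorm_indicator_eq_indicator_enorm _ _
  have hsum : ∫ τ in D, ∑' γ : Γ, H ((γ : SL(2, ℤ)) • τ) =
      ∑' γ : Γ, ∫ τ in D, H ((γ : SL(2, ℤ)) • τ) :=
    integral_tsum (fun γ ↦ (hH.1.comp_measurePreserving (hmp γ)).restrict) hfin
  rw [hsum, tsum_congr hi, ← integral_tsum (fun γ ↦ hH.1.indicator (hm γ)) hfin',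
    ← integral_const_mul]
  refine integral_congr_ae ?_
  filter_upwards [ae_exists_finset_translates hΓ hD1 hD2] with τ ⟨s, hs, h⟩
  exact tsum_indicator_translates H hs h

end Unfolding

lemma CuspForm.exists_bound_rpow {k : ℤ} {Γ : Subgroup (GL (Fin 2) ℝ)} [Γ.IsArithmetic]
    (f : CuspForm Γ k) {K : ℝ} (hK : (k / 2 : ℝ) ≤ K) :
    ∃ C, 0 ≤ C ∧ ∀ τ : ℍ, ‖f τ‖ ≤ C * τ.im ^ (-K) := by
  obtain ⟨C, hC⟩ := CuspFormClass.exists_bound f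
  obtain ⟨c, hc, hexp⟩ := CuspFormClass.exp_decay_atImInfty' f
  have hO : (f : ℍ → ℂ) =O[atImInfty] fun τ : ℍ ↦ τ.im ^ (-K) :=
    hexp.trans ((isLittleO_exp_neg_mul_rpow_atTop hc (-K)).isBigO.comp_tendsto
      Filter.tendsto_comap)
  obtain ⟨D, hD⟩ := hO.bound
  obtain ⟨Y, hY⟩ := (atImInfty_mem _).mp hD
  have hC0 : 0 ≤ C := by
    have h := (norm_nonneg _).trans (hC UpperHalfPlane.I)
    simpa using h
  refine ⟨max D (C * max Y 1 ^ (K - k / 2)), le_max_of_le_right (by positivity), fun τ ↦ ?_⟩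
  have hy := τ.im_pos
  rcases le_total Y τ.im with h | h
  · have := hY τ h
    simp only [Set.mem_ofPred_eq] at this
    rw [Real.norm_of_nonneg (by positivity)] at this
    exact this.trans (by gcongr; exact le_max_left _ _)
  · calc ‖f τ‖ ≤ C / τ.im ^ (k / 2 : ℝ) := hC τ
      _ = C * τ.im ^ (K - k / 2) * τ.im ^ (-K) := by
        rw [mul_assoc, ← Real.rpow_add hy, div_eq_mul_inv, ← Real.rpow_neg hy.le]
        congr 2
        ring
      _ ≤ C * max Y 1 ^ (K - k / 2) * τ.im ^ (-K) := by
        gcongr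
        exact h.trans (le_max_left _ _)
      _ ≤ _ := by gcongr; exact le_max_right _ _

open ConjAct Pointwise Matrix.SpecialLinearGroup in
lemma CuspForm.exists_bound_rpow_zero {k : ℤ} {Γ : Subgroup (GL (Fin 2) ℝ)} [Γ.IsArithmetic]
    (f : CuspForm Γ k) {K : ℝ} (hK : (k / 2 : ℝ) ≤ K) :
    ∃ C, 0 ≤ C ∧ ∀ τ : ℍ,
      ‖f τ‖ ≤ C * (τ.im / ‖(τ : ℂ)‖ ^ 2) ^ (-K) * ‖(τ : ℂ)‖ ^ (-k) := by
  have : ((toConjAct (ModularGroup.S : GL (Fin 2) ℝ)⁻¹) • Γ).IsArithmetic := by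
    simpa [(show Rat.castHom ℝ = algebraMap ℚ ℝ by rfl), map_inv, map_mapGL]
      using! Subgroup.IsArithmetic.conj Γ (mapGL ℚ ModularGroup.S)⁻¹
  obtain ⟨C, hC0, hC⟩ := CuspForm.exists_bound_rpow (CuspForm.translate f ModularGroup.S) hK
  refine ⟨C, hC0, fun τ ↦ ?_⟩
  have h := hC (ModularGroup.S • τ)
  rw [CuspForm.coe_translate, ModularForm.SL_slash_apply, ← mul_smul] at h
  have hS : (ModularGroup.S * ModularGroup.S : SL(2, ℤ)) • τ = τ := by
    have : (ModularGroup.S * ModularGroup.S : SL(2, ℤ)) = -1 := by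
      ext i j
      rw [SL_mul_apply]
      fin_cases i <;> fin_cases j <;> simp [ModularGroup.S]
    rw [this, ModularGroup.SL_neg_smul, one_smul]
  have hc : ((ModularGroup.S • τ : ℍ) : ℂ) = -1 / (τ : ℂ) := by
    rw [UpperHalfPlane.coe_specialLinearGroup_apply]
    simp [ModularGroup.S]
  have him : (ModularGroup.S • τ : ℍ).im = τ.im / ‖(τ : ℂ)‖ ^ 2 := by
    rw [ModularGroup.im_smul_eq_div_normSq, ModularGroup.denom_apply, Complex.normSq_eq_norm_sq]
    simp [ModularGroup.S]
  have hd : ‖denom ModularGroup.S (ModularGroup.S • τ : ℍ)‖ = ‖(τ : ℂ)‖⁻¹ := by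
    rw [ModularGroup.denom_apply, hc]
    simp [ModularGroup.S]
  rw [hS, norm_mul, norm_zpow, hd, him, inv_zpow, zpow_neg, inv_inv] at h
  have hp : 0 < ‖(τ : ℂ)‖ ^ k := zpow_pos (norm_pos_iff.mpr τ.ne_zero) _
  rw [zpow_neg, ← div_eq_mul_inv, le_div_iff₀ hp]
  exact h

lemma toC_coe (f : ℍ → ℂ) (τ : ℍ) : toC f τ = f τ := by
  simp [toC, τ.im_pos]

lemma toC_of_pos (f : ℍ → ℂ) {z : ℂ} (h : 0 < z.im) : toC f z = f ⟨z, h⟩ := by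
  simp [toC, h]

lemma differentiableOn_toC {f : ℍ → ℂ} (hf : MDiff f) :
    DifferentiableOn ℂ (toC f) {z | 0 < z.im} := by
  rw [UpperHalfPlane.mdifferentiable_iff] at hf
  refine hf.congr fun z hz ↦ ?_
  rw [toC_of_pos f hz, Function.comp, UpperHalfPlane.ofComplex_apply_of_im_pos hz]

lemma exp_im_pos {u : ℂ} (h0 : 0 < u.im) (h1 : u.im < π) : 0 < (Complex.exp u).im := by
  rw [Complex.exp_im]
  exact mul_pos (Real.exp_pos _) (Real.sin_pos_of_pos_of_lt_pi h0 h1)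

/-- The integrand of the `n`-th period of `f` in logarithmic coordinates. -/
def logIntegrand (n : ℕ) (f : ℍ → ℂ) (u : ℂ) : ℂ :=
  toC f (Complex.exp u) * Complex.exp u ^ (n + 1)

lemma exists_norm_logIntegrand_le {w n : ℕ} {Γ : Subgroup (GL (Fin 2) ℝ)} [Γ.IsArithmetic]
    (f : CuspForm Γ (w + 2)) (hn0 : 0 < n) (hnw : n < w) :
    ∃ C, 0 ≤ C ∧ ∀ u : ℂ, 0 < u.im → u.im < π →
      ‖logIntegrand n f u‖ ≤ C * Real.exp (-|u.re| / 2) * Real.sin u.im ^ (-(w + 1 / 2 : ℝ)) := by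
  have hw : (2 : ℝ) ≤ w := by exact_mod_cast (by omega : 2 ≤ w)
  have hn : (1 : ℝ) ≤ n := by exact_mod_cast hn0
  have hnw' : (n : ℝ) + 1 ≤ w := by exact_mod_cast hnw
  have hK : ((((w : ℤ) + 2 : ℤ) : ℝ) / 2) ≤ (w + 1 / 2 : ℝ) := by push_cast; linarith
  obtain ⟨C₁, hC₁, h₁⟩ := CuspForm.exists_bound_rpow f hK
  obtain ⟨C₂, hC₂, h₂⟩ := CuspForm.exists_bound_rpow_zero f hK
  refine ⟨max C₁ C₂, le_max_of_le_left hC₁, fun u hu0 hu1 ↦ ?_⟩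
  have hpos := exp_im_pos hu0 hu1
  have hsin := Real.sin_pos_of_pos_of_lt_pi hu0 hu1
  set K : ℝ := w + 1 / 2 with hKdef
  set σ := Real.sin u.im ^ (-K)
  have hσ : 0 < σ := by positivity
  have him : (Complex.exp u).im = Real.exp u.re * Real.sin u.im := Complex.exp_im u
  rw [logIntegrand, toC_of_pos _ hpos, norm_mul, norm_pow, Complex.norm_exp, ← Real.exp_nat_mul]
  rcases le_total 0 u.re with hs | hs
  · rw [abs_of_nonneg hs]
    have h := h₁ ⟨Complex.exp u, hpos⟩
    change _ ≤ C₁ * (Complex.exp u).im ^ (-K) at h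
    rw [him, Real.mul_rpow (by positivity) hsin.le, ← Real.exp_mul] at h
    calc _ ≤ C₁ * (Real.exp (u.re * -K) * σ) * Real.exp (((n + 1 : ℕ) : ℝ) * u.re) := by gcongr
      _ = C₁ * Real.exp (u.re * -K + ((n + 1 : ℕ) : ℝ) * u.re) * σ := by rw [Real.exp_add]; ring
      _ ≤ _ := by
        gcongr
        · exact le_max_left _ _
        · push_cast; rw [hKdef]; nlinarith
  · rw [abs_of_nonpos hs]
    have h := h₂ ⟨Complex.exp u, hpos⟩
    change _ ≤ C₂ * ((Complex.exp u).im / ‖Complex.exp u‖ ^ 2) ^ (-K) *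
      ‖Complex.exp u‖ ^ (-((w : ℤ) + 2)) at h
    rw [Complex.norm_exp] at h
    have e1 : (Complex.exp u).im / Real.exp u.re ^ 2 = Real.exp (-u.re) * Real.sin u.im := by
      rw [him, Real.exp_neg]; field_simp
    have e2 : Real.exp u.re ^ (-((w : ℤ) + 2)) = Real.exp (-((w : ℝ) + 2) * u.re) := by
      rw [← Real.rpow_intCast, ← Real.exp_mul]; push_cast; ring_nf
    rw [e1, e2, Real.mul_rpow (by positivity) hsin.le, ← Real.exp_mul] at h
    calc _ ≤ C₂ * (Real.exp (-u.re * -K) * σ) * Real.exp (-((w : ℝ) + 2) * u.re) *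
          Real.exp (((n + 1 : ℕ) : ℝ) * u.re) := by gcongr
      _ = C₂ * Real.exp (-u.re * -K + (-((w : ℝ) + 2) * u.re) + ((n + 1 : ℕ) : ℝ) * u.re) * σ := by
        rw [Real.exp_add, Real.exp_add]; ring
      _ ≤ _ := by
        gcongr
        · exact le_max_right _ _
        · push_cast; rw [hKdef]; nlinarith

lemma differentiableAt_logIntegrand (n : ℕ) {f : ℍ → ℂ} (hf : MDiff f) {u : ℂ} (h0 : 0 < u.im)
    (h1 : u.im < π) : DifferentiableAt ℂ (logIntegrand n f) u := by
  have hopen : IsOpen {z : ℂ | 0 < z.im} := isOpen_lt continuous_const Complex.continuous_im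
  have h := (differentiableOn_toC hf).differentiableAt (hopen.mem_nhds (exp_im_pos h0 h1))
  unfold logIntegrand
  exact (h.comp u Complex.differentiableAt_exp).mul (by fun_prop)

lemma integrable_exp_neg_abs_div_two : Integrable fun s : ℝ ↦ Real.exp (-|s| / 2) := by
  rw [← integrableOn_univ, ← Set.Iic_union_Ioi (a := (0 : ℝ)), integrableOn_union]
  constructor
  · refine (integrableOn_exp_mul_Iic (a := 1 / 2) (by norm_num) 0).congr_fun (fun x hx ↦ ?_)
      measurableSet_Iic
    simp only [abs_of_nonpos (Set.mem_Iic.mp hx)]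
    ring_nf
  · refine (integrableOn_exp_mul_Ioi (a := -(1 / 2)) (by norm_num) 0).congr_fun (fun x hx ↦ ?_)
      measurableSet_Ioi
    simp only [abs_of_pos (Set.mem_Ioi.mp hx)]
    ring_nf

lemma integrableOn_sin_rpow : IntegrableOn (fun t ↦ Real.sin t ^ (-(1 / 2) : ℝ)) (Set.Ioo 0 π) := by
  have h1 : IntervalIntegrable (fun t : ℝ ↦ t ^ (-(1 / 2) : ℝ)) volume 0 π :=
    intervalIntegral.intervalIntegrable_rpow' (by norm_num)
  have h2 : IntervalIntegrable (fun t : ℝ ↦ (π - t) ^ (-(1 / 2) : ℝ)) volume 0 π := by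
    simpa using (h1.comp_sub_left π).symm
  have h3 := (h1.add h2).const_mul ((2 / π) ^ (-(1 / 2) : ℝ))
  rw [intervalIntegrable_iff_integrableOn_Ioo_of_le Real.pi_pos.le] at h3
  refine h3.mono' ?_ ?_
  · exact (Real.measurable_sin.pow_const _).aestronglyMeasurable
  · refine (ae_restrict_iff' measurableSet_Ioo).mpr (.of_forall fun t ht ↦ ?_)
    have hs := Real.sin_pos_of_pos_of_lt_pi ht.1 ht.2
    rw [Real.norm_of_nonneg (by positivity)]
    have hp := Real.pi_pos
    have hp2 : 0 < 2 / π := by positivity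
    have a1 : 0 < t ^ (-(1 / 2) : ℝ) := Real.rpow_pos_of_pos ht.1 _
    have a2 : 0 < (π - t) ^ (-(1 / 2) : ℝ) := Real.rpow_pos_of_pos (sub_pos.mpr ht.2) _
    have a3 : 0 < (2 / π) ^ (-(1 / 2) : ℝ) := Real.rpow_pos_of_pos hp2 _
    rcases le_total t (π / 2) with h | h
    · have := Real.rpow_le_rpow_of_nonpos (z := -(1 / 2)) (mul_pos hp2 ht.1)
        (Real.mul_le_sin ht.1.le h) (by norm_num)
      rw [Real.mul_rpow hp2.le ht.1.le] at this
      nlinarith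
    · have := Real.rpow_le_rpow_of_nonpos (z := -(1 / 2)) (mul_pos hp2 (sub_pos.mpr ht.2))
        (Real.mul_le_sin (sub_pos.mpr ht.2).le (by linarith)) (by norm_num)
      rw [Real.mul_rpow hp2.le (sub_pos.mpr ht.2).le, Real.sin_pi_sub] at this
      nlinarith

/-- The strip mapped onto the upper half-plane by the exponential. -/
def logStrip : Set ℂ := {u | u.im ∈ Set.Ioo 0 π}

lemma measurableSet_logStrip : MeasurableSet logStrip :=
  Complex.measurable_im measurableSet_Ioo

lemma logStrip_preimage :
    Complex.measurableEquivRealProd.symm ⁻¹' logStrip = Set.univ ×ˢ Set.Ioo 0 π := by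
  ext p
  simp [logStrip]

lemma integrableOn_logStrip_iff {A : ℂ → ℂ} :
    IntegrableOn A logStrip ↔
      Integrable (fun p : ℝ × ℝ ↦ A (p.1 + p.2 * Complex.I))
        (volume.prod (volume.restrict (Set.Ioo 0 π))) := by
  rw [← Complex.volume_preserving_equiv_real_prod.symm.integrableOn_comp_preimage
    (MeasurableEquiv.measurableEmbedding _), logStrip_preimage, IntegrableOn,
    Measure.volume_eq_prod, ← Measure.prod_restrict, Measure.restrict_univ]
  refine integrable_congr (.of_forall fun p ↦ ?_)
  simp only [Function.comp, Complex.measurableEquivRealProd_symm_apply, Complex.mk_eq_add_mul_I]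

lemma integral_logStrip {A : ℂ → ℂ} (hA : IntegrableOn A logStrip) :
    ∫ u in logStrip, A u = ∫ t in Set.Ioo 0 π, ∫ s : ℝ, A (s + t * Complex.I) := by
  rw [← Complex.volume_preserving_equiv_real_prod.symm.setIntegral_preimage_emb
    (MeasurableEquiv.measurableEmbedding _), logStrip_preimage,
    Measure.volume_eq_prod, ← Measure.prod_restrict, Measure.restrict_univ]
  rw [← integral_prod_symm _ (integrableOn_logStrip_iff.mp hA)]
  refine integral_congr_ae (.of_forall fun p ↦ ?_)
  simp only [Complex.measurableEquivRealProd_symm_apply, Complex.mk_eq_add_mul_I]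

lemma injOn_exp_logStrip : Set.InjOn Complex.exp logStrip := by
  intro u hu v hv h
  have hp := Real.pi_pos
  exact Complex.exp_inj_of_neg_pi_lt_of_le_pi (by linarith [hu.1]) hu.2.le
    (by linarith [hv.1]) hv.2.le h

lemma exp_image_logStrip : Complex.exp '' logStrip = {z | 0 < z.im} := by
  ext z
  constructor
  · rintro ⟨u, hu, rfl⟩
    exact exp_im_pos hu.1 hu.2
  · intro hz
    have hz0 : z ≠ 0 := by rintro rfl; simp at hz
    refine ⟨Complex.log z, ?_, Complex.exp_log hz0⟩
    simp only [logStrip, Set.mem_ofPred_eq, Complex.log_im]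
    refine ⟨lt_of_le_of_ne (Complex.arg_nonneg_iff.mpr (le_of_lt hz)) fun h ↦ ?_,
      lt_of_le_of_ne (Complex.arg_le_pi z) fun h ↦ ?_⟩
    · exact absurd (Complex.arg_eq_zero_iff.mp h.symm).2 (ne_of_gt hz)
    · exact absurd (Complex.arg_eq_pi_iff.mp h).2 (ne_of_gt hz)

lemma hasFDerivWithinAt_exp (u : ℂ) (S : Set ℂ) :
    HasFDerivWithinAt Complex.exp
      ((ContinuousLinearMap.toSpanSingleton ℂ (Complex.exp u)).restrictScalars ℝ) S u :=
  ((Complex.hasDerivAt_exp u).hasFDerivAt.restrictScalars ℝ).hasFDerivWithinAt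

lemma abs_det_exp (u : ℂ) :
    |((ContinuousLinearMap.toSpanSingleton ℂ (Complex.exp u)).restrictScalars ℝ).det| =
      Real.exp u.re ^ 2 := by
  simp [ContinuousLinearMap.det, LinearMap.det_restrictScalars,
      Algebra.norm_complex_eq, Complex.normSq_eq_norm_sq, Complex.norm_exp]

lemma integral_halfPlane_exp (Φ : ℂ → ℂ) :
    ∫ z in {z : ℂ | 0 < z.im}, Φ z =
      ∫ u in logStrip, ((Real.exp u.re ^ 2 : ℝ) : ℂ) * Φ (Complex.exp u) := by
  rw [← exp_image_logStrip, integral_image_eq_integral_abs_det_fderiv_smul volume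
    measurableSet_logStrip (fun u _ ↦ hasFDerivWithinAt_exp u _) injOn_exp_logStrip]
  simp only [abs_det_exp, Complex.real_smul]

lemma integrableOn_halfPlane_exp (Φ : ℂ → ℂ) :
    IntegrableOn Φ {z : ℂ | 0 < z.im} ↔
      IntegrableOn (fun u ↦ ((Real.exp u.re ^ 2 : ℝ) : ℂ) * Φ (Complex.exp u)) logStrip := by
  rw [← exp_image_logStrip, integrableOn_image_iff_integrableOn_abs_det_fderiv_smul volume
    measurableSet_logStrip (fun u _ ↦ hasFDerivWithinAt_exp u _) injOn_exp_logStrip]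
  simp only [abs_det_exp, Complex.real_smul]

/-- The product of `logIntegrand n f` with the angular factor arising from pairing `f` with
`z⁻¹ ^ (w - n + 1)`. -/
def pairingIntegrand (w n : ℕ) (f : ℍ → ℂ) (u : ℂ) : ℂ :=
  Complex.exp (((w : ℂ) - 2 * n) * u.im * Complex.I) * (Real.sin u.im : ℂ) ^ w * logIntegrand n f u

lemma norm_exp_ofReal_mul (w n : ℕ) (t : ℝ) :
    ‖Complex.exp (((w : ℂ) - 2 * n) * t * Complex.I)‖ = 1 := by
  have : ((w : ℂ) - 2 * n) * t = (((w : ℝ) - 2 * n) * t : ℝ) := by push_cast; ring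
  rw [this, Complex.norm_exp_ofReal_mul_I]

lemma integrableOn_pairingIntegrand {w n : ℕ} {Γ : Subgroup (GL (Fin 2) ℝ)} [Γ.IsArithmetic]
    (f : CuspForm Γ (w + 2)) (hn0 : 0 < n) (hnw : n < w) :
    IntegrableOn (pairingIntegrand w n f) logStrip := by
  obtain ⟨C, hC, h⟩ := exists_norm_logIntegrand_le f hn0 hnw
  have hint : IntegrableOn (fun u : ℂ ↦ ((C * (Real.exp (-|u.re| / 2) *
      Real.sin u.im ^ (-(1 / 2) : ℝ)) : ℝ) : ℂ)) logStrip := by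
    rw [integrableOn_logStrip_iff]
    simp only [Complex.add_re, Complex.ofReal_re, Complex.mul_re, Complex.ofReal_im, Complex.I_re,
      Complex.I_im, mul_zero, sub_zero, add_zero, Complex.add_im, Complex.mul_im, mul_one,
      zero_add]
    exact ((integrable_exp_neg_abs_div_two.mul_prod integrableOn_sin_rpow).const_mul C).ofReal
  refine hint.norm.mono' ?_ ((ae_restrict_iff' measurableSet_logStrip).mpr
    (.of_forall fun u hu ↦ ?_))
  · refine ContinuousOn.aestronglyMeasurable (fun u hu ↦ ?_) measurableSet_logStrip
    have h1 := (differentiableAt_logIntegrand n f.holo' hu.1 hu.2).continuousAt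
    refine (ContinuousAt.mul ?_ h1).continuousWithinAt
    fun_prop
  · have hs := Real.sin_pos_of_pos_of_lt_pi hu.1 hu.2
    have hb := h u hu.1 hu.2
    rw [Complex.norm_real, Real.norm_of_nonneg (by positivity), pairingIntegrand, norm_mul,
      norm_mul, norm_exp_ofReal_mul, one_mul, norm_pow, Complex.norm_real,
      Real.norm_of_nonneg hs.le]
    calc _ ≤ Real.sin u.im ^ w * (C * Real.exp (-|u.re| / 2) *
          Real.sin u.im ^ (-(w + 1 / 2 : ℝ))) := by gcongr
      _ = C * (Real.exp (-|u.re| / 2) * (Real.sin u.im ^ (w : ℝ) *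
          Real.sin u.im ^ (-(w + 1 / 2 : ℝ)))) := by rw [Real.rpow_natCast]; ring
      _ ≤ _ := by
        rw [← Real.rpow_add hs]
        ring_nf
        rfl

lemma pairing_eq_pairingIntegrand {w n : ℕ} (hnw : n ≤ w) (f : ℍ → ℂ) {u : ℂ} (hu : u ∈ logStrip) :
    ((Real.exp u.re ^ 2 : ℝ) : ℂ) * (((1 / (Complex.exp u).im ^ 2 : ℝ) : ℂ) *
      (conj (1 / Complex.exp u ^ (w - n + 1)) * toC f (Complex.exp u) *
        ((Complex.exp u).im : ℂ) ^ (w + 2))) = pairingIntegrand w n f u := by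
  have hs := Real.sin_pos_of_pos_of_lt_pi hu.1 hu.2
  obtain ⟨m, rfl⟩ := Nat.exists_eq_add_of_le hnw
  rw [pairingIntegrand, logIntegrand, Complex.exp_im, add_tsub_cancel_left, map_div₀, map_one,
    map_pow, ← Complex.exp_conj]
  have h1 : Complex.exp u = Complex.exp u.re * Complex.exp (u.im * Complex.I) := by
    rw [← Complex.exp_add, Complex.re_add_im]
  have h2 : Complex.exp (conj u) = Complex.exp u.re * (Complex.exp (u.im * Complex.I))⁻¹ := by
    rw [← Complex.exp_neg, ← Complex.exp_add]
    congr 1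
    apply Complex.ext <;> simp
  have h3 : Complex.exp ((((n + m : ℕ) : ℂ) - 2 * n) * u.im * Complex.I) =
      Complex.exp (u.im * Complex.I) ^ m * (Complex.exp (u.im * Complex.I) ^ n)⁻¹ := by
    rw [← Complex.exp_nat_mul, ← Complex.exp_nat_mul, ← Complex.exp_neg, ← Complex.exp_add]
    congr 1
    push_cast
    ring
  rw [h2, h3]
  have hs' : (Real.sin u.im : ℂ) ≠ 0 := by exact_mod_cast hs.ne'
  have hr := Complex.exp_ne_zero (u.re : ℂ)
  have hθ := Complex.exp_ne_zero (u.im * Complex.I)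
  have h4 : Complex.exp u ^ (n + 1) =
    Complex.exp u.re ^ (n + 1) * Complex.exp (u.im * Complex.I) ^ (n + 1) := by
    rw [h1, mul_pow]
  rw [h4]
  push_cast
  generalize toC f (Complex.exp u) = T
  rw [← Complex.ofReal_sin]
  generalize (Real.sin u.im : ℂ) = S at *
  generalize Complex.exp u.re = r at *
  generalize Complex.exp (u.im * Complex.I) = q at *
  simp only [mul_pow, inv_pow]
  field_simp
  ring

lemma integrableOn_logIntegrand_line {w n : ℕ} {Γ : Subgroup (GL (Fin 2) ℝ)} [Γ.IsArithmetic]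
    (f : CuspForm Γ (w + 2)) (hn0 : 0 < n) (hnw : n < w) {t : ℝ} (ht : t ∈ Set.Ioo 0 π) :
    Integrable fun s : ℝ ↦ logIntegrand n f (s + t * Complex.I) := by
  obtain ⟨C, hC, h⟩ := exists_norm_logIntegrand_le f hn0 hnw
  have hre (s : ℝ) : (s + t * Complex.I).re = s := by simp
  have him (s : ℝ) : (s + t * Complex.I).im = t := by simp
  refine ((integrable_exp_neg_abs_div_two.const_mul C).mul_const
    (Real.sin t ^ (-(w + 1 / 2 : ℝ)))).mono' ?_ (.of_forall fun s ↦ ?_)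
  · refine (continuous_iff_continuousAt.mpr fun s ↦ ?_).aestronglyMeasurable
    have h1 := (differentiableAt_logIntegrand n f.holo' (u := s + t * Complex.I)
      (by rw [him]; exact ht.1) (by rw [him]; exact ht.2)).continuousAt
    exact ContinuousAt.comp (f := fun s : ℝ ↦ (s + t * Complex.I : ℂ)) h1 (by fun_prop)
  · simpa only [hre, him] using h (s + t * Complex.I) (by rw [him]; exact ht.1)
      (by rw [him]; exact ht.2)

lemma integral_logIntegrand_line_eq {w n : ℕ} {Γ : Subgroup (GL (Fin 2) ℝ)} [Γ.IsArithmetic]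
    (f : CuspForm Γ (w + 2)) (hn0 : 0 < n) (hnw : n < w) {t₁ t₂ : ℝ} (ht₁ : t₁ ∈ Set.Ioo 0 π)
    (ht₂ : t₂ ∈ Set.Ioo 0 π) :
    ∫ s : ℝ, logIntegrand n f (s + t₁ * Complex.I) =
      ∫ s : ℝ, logIntegrand n f (s + t₂ * Complex.I) := by
  obtain ⟨C, hC, hb⟩ := exists_norm_logIntegrand_le f hn0 hnw
  have hsub : Set.uIcc t₁ t₂ ⊆ Set.Ioo 0 π := Set.OrdConnected.uIcc_subset inferInstance ht₁ ht₂
  -- a bound uniform in the vertical direction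
  obtain ⟨M, hM⟩ : ∃ M, ∀ t ∈ Set.uIcc t₁ t₂, Real.sin t ^ (-(w + 1 / 2 : ℝ)) ≤ M := by
    have hc : ContinuousOn (fun t ↦ Real.sin t ^ (-(w + 1 / 2 : ℝ))) (Set.uIcc t₁ t₂) :=
      Real.continuous_sin.continuousOn.rpow_const fun t ht ↦
        .inl (Real.sin_pos_of_pos_of_lt_pi (hsub ht).1 (hsub ht).2).ne'
    obtain ⟨M, hM⟩ := (isCompact_uIcc.image_of_continuousOn hc).bddAbove
    exact ⟨M, fun t ht ↦ hM ⟨t, ht, rfl⟩⟩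
  have hvert (R : ℝ) : ‖∫ y in t₁..t₂, logIntegrand n f ((R : ℂ) + y * Complex.I)‖ ≤
      C * Real.exp (-|R| / 2) * M * |t₂ - t₁| := by
    refine intervalIntegral.norm_integral_le_of_norm_le_const fun t ht ↦ ?_
    have ht' := Set.uIoc_subset_uIcc ht
    have h := hb ((R : ℂ) + t * Complex.I) (by simpa using (hsub ht').1)
      (by simpa using (hsub ht').2)
    simp only [Complex.add_re, Complex.ofReal_re, Complex.mul_re, Complex.ofReal_im, Complex.I_re,
      Complex.I_im, mul_zero, sub_zero, add_zero, Complex.add_im, Complex.mul_im, mul_one,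
      zero_add] at h
    refine h.trans ?_
    gcongr
    exact hM t ht'
  have hexp : Filter.Tendsto (fun R : ℝ ↦ C * Real.exp (-|R| / 2) * M * |t₂ - t₁|)
      Filter.atTop (nhds 0) := by
    have : Filter.Tendsto (fun R : ℝ ↦ -|R| / 2) Filter.atTop Filter.atBot := by
      refine Filter.Tendsto.atBot_div_const (by norm_num) ?_
      exact Filter.tendsto_neg_atTop_atBot.comp Filter.tendsto_abs_atTop_atTop
    simpa using (((Real.tendsto_exp_atBot.comp this).const_mul C).mul_const M).mul_const |t₂ - t₁|
  have hR : Filter.Tendsto (fun R : ℝ ↦ ∫ y in t₁..t₂, logIntegrand n f ((R : ℂ) + y * Complex.I))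
      Filter.atTop (nhds 0) := squeeze_zero_norm hvert hexp
  have hL : Filter.Tendsto
      (fun R : ℝ ↦ ∫ y in t₁..t₂, logIntegrand n f (((-R : ℝ) : ℂ) + y * Complex.I))
      Filter.atTop (nhds 0) :=
    squeeze_zero_norm (fun R ↦ by simpa only [abs_neg] using hvert (-R)) hexp
  have htop (t : ℝ) (ht : t ∈ Set.Ioo 0 π) : Filter.Tendsto
      (fun R : ℝ ↦ ∫ x in (-R)..R, logIntegrand n f (x + t * Complex.I)) Filter.atTop
      (nhds (∫ s : ℝ, logIntegrand n f (s + t * Complex.I))) :=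
    intervalIntegral_tendsto_integral (integrableOn_logIntegrand_line f hn0 hnw ht)
      Filter.tendsto_neg_atTop_atBot Filter.tendsto_id
  have hrect (R : ℝ) : (∫ x in (-R)..R, logIntegrand n f (x + t₁ * Complex.I)) -
      (∫ x in (-R)..R, logIntegrand n f (x + t₂ * Complex.I)) +
      Complex.I • (∫ y in t₁..t₂, logIntegrand n f ((R : ℂ) + y * Complex.I)) -
      Complex.I • (∫ y in t₁..t₂, logIntegrand n f (((-R : ℝ) : ℂ) + y * Complex.I)) = 0 := by
    have := Complex.integral_boundary_rect_eq_zero_of_differentiableOn (logIntegrand n f)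
      (((-R : ℝ) : ℂ) + t₁ * Complex.I) ((R : ℂ) + t₂ * Complex.I) (fun u hu ↦ by
        have hu2 := hu.2
        simp only [Set.mem_preimage] at hu2
        simp at hu2
        exact (differentiableAt_logIntegrand n f.holo' (hsub hu2).1
          (hsub hu2).2).differentiableWithinAt)
    simpa using this
  have hlim := (((htop t₁ ht₁).sub (htop t₂ ht₂)).add (hR.const_smul Complex.I)).sub
    (hL.const_smul Complex.I)
  simp only [hrect, smul_zero, add_zero, sub_zero] at hlim
  exact sub_eq_zero.mp (tendsto_nhds_unique hlim tendsto_const_nhds)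

lemma integral_logIntegrand_pi_div_two (n : ℕ) (f : ℍ → ℂ) :
    ∫ s : ℝ, logIntegrand n f (s + (π / 2 : ℝ) * Complex.I) = periodInt n f := by
  rw [periodInt, ← Real.range_exp, ← Set.image_univ,
    integral_image_eq_integral_abs_deriv_smul MeasurableSet.univ
      (fun x _ ↦ (Real.hasDerivAt_exp x).hasDerivWithinAt) Real.exp_injective.injOn,
    Measure.restrict_univ, ← integral_const_mul]
  refine integral_congr_ae (.of_forall fun s ↦ ?_)
  have h : Complex.exp (s + (π / 2 : ℝ) * Complex.I) = Complex.I * (Real.exp s : ℝ) := by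
    rw [Complex.exp_add]
    push_cast
    rw [Complex.exp_pi_div_two_mul_I, mul_comm]
  simp only [logIntegrand, h, abs_of_pos (Real.exp_pos s), Complex.real_smul]
  ring

lemma integral_exp_two_mul_int (j : ℤ) :
    ∫ t in (0 : ℝ)..π, Complex.exp (2 * j * Complex.I * t) = if j = 0 then (π : ℂ) else 0 := by
  split_ifs with h
  · simp [h]
  · have hj : (j : ℂ) ≠ 0 := by exact_mod_cast h
    rw [integral_exp_mul_complex (by simp [hj])]
    have : 2 * (j : ℂ) * Complex.I * π = j * (2 * π * Complex.I) := by ring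
    rw [this, Complex.exp_int_mul_two_pi_mul_I]
    simp

lemma integral_exp_mul_sin_pow {w n : ℕ} (hw : Even w) (hnw : n ≤ w) :
    ∫ t in Set.Ioo 0 π, Complex.exp (((w : ℂ) - 2 * n) * t * Complex.I) * (Real.sin t : ℂ) ^ w =
      π * ((2 * Complex.I) ^ w)⁻¹ * (-1) ^ n * (w.choose n) := by
  have key (t : ℝ) :
      Complex.exp (((w : ℂ) - 2 * n) * t * Complex.I) * (Real.sin t : ℂ) ^ w =
      ∑ k ∈ Finset.range (w + 1), ((2 * Complex.I) ^ w)⁻¹ * (-1) ^ k * (w.choose k) *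
        Complex.exp (2 * ((k : ℤ) - n : ℤ) * Complex.I * t) := by
    have hsin : (Real.sin t : ℂ) = (2 * Complex.I)⁻¹ *
        (Complex.exp (t * Complex.I) + -Complex.exp (-t * Complex.I)) := by
      rw [Complex.ofReal_sin, Complex.sin]
      field_simp
      rw [Complex.I_sq]
      ring
    rw [hsin, mul_pow, add_pow, Finset.mul_sum, Finset.mul_sum]
    refine Finset.sum_congr rfl fun k hk ↦ ?_
    obtain ⟨l, rfl⟩ := Nat.exists_eq_add_of_le (Finset.mem_range_succ_iff.mp hk)
    have hsign : (-1 : ℂ) ^ l = (-1) ^ k := by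
      have : (-1 : ℂ) ^ (k + l) = 1 := hw.neg_one_pow
      rw [pow_add] at this
      rcases neg_one_pow_eq_or ℂ k with h | h <;> rcases neg_one_pow_eq_or ℂ l with h' | h' <;>
        simp_all
    rw [add_tsub_cancel_left, neg_pow (Complex.exp _), hsign, ← Complex.exp_nat_mul,
      ← Complex.exp_nat_mul, inv_pow]
    have : Complex.exp (2 * ((k : ℤ) - n : ℤ) * Complex.I * t) =
        Complex.exp ((((k + l : ℕ) : ℂ) - 2 * n) * t * Complex.I) *
          (Complex.exp (k * (t * Complex.I)) * Complex.exp (l * (-t * Complex.I))) := by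
      rw [← Complex.exp_add, ← Complex.exp_add]
      congr 1
      push_cast
      ring
    rw [this]
    ring
  rw [← integral_Ioc_eq_integral_Ioo, ← intervalIntegral.integral_of_le Real.pi_pos.le]
  simp only [key]
  rw [intervalIntegral.integral_finsetSum fun k _ ↦
    Continuous.intervalIntegrable (by fun_prop) _ _]
  simp only [intervalIntegral.integral_const_mul, integral_exp_two_mul_int, sub_eq_zero,
    Nat.cast_inj, mul_ite, mul_zero]
  rw [Finset.sum_ite_eq' , if_pos (Finset.mem_range_succ_iff.mpr hnw)]
  ring

lemma integral_pairingIntegrand {w n : ℕ} {Γ : Subgroup (GL (Fin 2) ℝ)} [Γ.IsArithmetic]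
    (f : CuspForm Γ (w + 2)) (hw : Even w) (hn0 : 0 < n) (hnw : n < w) :
    ∫ u in logStrip, pairingIntegrand w n f u =
      π * ((2 * Complex.I) ^ w)⁻¹ * (-1) ^ n * (w.choose n) * periodInt n f := by
  rw [integral_logStrip (integrableOn_pairingIntegrand f hn0 hnw),
    ← integral_exp_mul_sin_pow hw hnw.le, ← integral_mul_const]
  refine setIntegral_congr_fun measurableSet_Ioo fun t ht ↦ ?_
  have him (s : ℝ) : ((s : ℂ) + t * Complex.I).im = t := by simp
  simp only [pairingIntegrand, him]
  rw [integral_const_mul, integral_logIntegrand_line_eq f hn0 hnw ht (t₂ := π / 2)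
    ⟨by positivity, by linarith [Real.pi_pos]⟩, integral_logIntegrand_pi_div_two]

/-- The integrand of the unfolded Petersson product of `f` with the series of
`z⁻¹ ^ (w - n + 1)`. -/
def unfoldedIntegrand (w n : ℕ) (f : ℍ → ℂ) (z : ℂ) : ℂ :=
  conj (1 / z ^ (w - n + 1)) * toC f z * (z.im : ℂ) ^ (w + 2)

lemma integrable_unfoldedIntegrand {w n : ℕ} {Γ : Subgroup (GL (Fin 2) ℝ)} [Γ.IsArithmetic]
    (f : CuspForm Γ (w + 2)) (hn0 : 0 < n) (hnw : n < w) :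
    Integrable fun τ : ℍ ↦ unfoldedIntegrand w n f τ := by
  refine integrable_upperHalfPlane ((integrableOn_halfPlane_exp _).mpr ?_)
  exact (integrableOn_pairingIntegrand f hn0 hnw).congr_fun
    (fun u hu ↦ (pairing_eq_pairingIntegrand hnw.le f hu).symm) measurableSet_logStrip

lemma integral_unfoldedIntegrand {w n : ℕ} {Γ : Subgroup (GL (Fin 2) ℝ)} [Γ.IsArithmetic]
    (f : CuspForm Γ (w + 2)) (hw : Even w) (hn0 : 0 < n) (hnw : n < w) :
    ∫ τ : ℍ, unfoldedIntegrand w n f τ =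
      π * ((2 * Complex.I) ^ w)⁻¹ * (-1) ^ n * (w.choose n) * periodInt n f := by
  have h := setIntegral_upperHalfPlane (unfoldedIntegrand w n f)
    (F := {z : ℂ | 0 < z.im}) (measurableSet_lt measurable_const Complex.measurable_im) subset_rfl
  have huniv : ((↑) : ℍ → ℂ) ⁻¹' {z : ℂ | 0 < z.im} = Set.univ :=
    Set.eq_univ_of_forall fun τ ↦ τ.im_pos
  rw [huniv, setIntegral_univ] at h
  rw [h, integral_halfPlane_exp, ← integral_pairingIntegrand f hw hn0 hnw]
  exact setIntegral_congr_fun measurableSet_logStrip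
    fun u hu ↦ pairing_eq_pairingIntegrand hnw.le f hu

/-- `Γ₀(N)` as the set of its matrix entries. -/
def gamma0EquivEntries (N : ℕ) : CongruenceSubgroup.Gamma0 N ≃ {p : ℤ × ℤ × ℤ × ℤ //
    p.1 * p.2.2.2 - p.2.1 * p.2.2.1 = 1 ∧ (N : ℤ) ∣ p.2.2.1} where
  toFun γ := ⟨((γ : SL(2, ℤ)) 0 0, (γ : SL(2, ℤ)) 0 1, (γ : SL(2, ℤ)) 1 0, (γ : SL(2, ℤ)) 1 1),
    by rw [← Matrix.det_fin_two, (γ : SL(2, ℤ)).det_coe],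
    (ZMod.intCast_zmod_eq_zero_iff_dvd _ N).mp (CongruenceSubgroup.Gamma0_mem.mp γ.2)⟩
  invFun p := ⟨⟨!![p.1.1, p.1.2.1; p.1.2.2.1, p.1.2.2.2], by
      rw [Matrix.det_fin_two_of, p.2.1]⟩,
    CongruenceSubgroup.Gamma0_mem.mpr ((ZMod.intCast_zmod_eq_zero_iff_dvd _ N).mpr p.2.2)⟩
  left_inv γ := by
    ext i j
    fin_cases i <;> fin_cases j <;> rfl
  right_inv p := rfl

lemma Rq_eq_kerSeries (N w n : ℕ) (z : ℂ) :
    Rq N w n z = (cconst w n)⁻¹ * kerSeries (CongruenceSubgroup.Gamma0 N) (w - n) n z := by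
  rw [Rq, kerSeries, ← (gamma0EquivEntries N).tsum_eq]
  rfl

lemma cconst_eq (w n : ℕ) :
    cconst w n = 2 * (π * ((2 * Complex.I) ^ w)⁻¹ * (-1) ^ n * (w.choose n)) := by
  have h2 : (2 * Complex.I : ℂ) ≠ 0 := by simp
  rw [cconst, zpow_sub₀ h2, zpow_neg, zpow_natCast, zpow_one]
  field_simp
  ring

lemma cconst_ne_zero {w n : ℕ} (hnw : n ≤ w) : cconst w n ≠ 0 := by
  have := Nat.choose_ne_zero hnw
  simp [cconst_eq, Real.pi_ne_zero, this]

lemma conj_cconst {w : ℕ} (hw : Even w) (n : ℕ) : conj (cconst w n) = cconst w n := by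
  simp [cconst_eq, hw.neg_pow, map_ofNat (starRingEnd ℂ)]

variable {N : ℕ} {F : Set ℂ}

lemma coe_smul_eq_entries (γ : SL(2, ℤ)) (τ : ℍ) : ((γ • τ : ℍ) : ℂ) =
    ((γ 0 0 : ℂ) * τ + (γ 0 1 : ℂ)) / ((γ 1 0 : ℂ) * τ + (γ 1 1 : ℂ)) := by
  rw [UpperHalfPlane.coe_specialLinearGroup_apply]
  simp

lemma IsFundDom.exists_smul_mem (hF : IsFundDom N F) (τ : ℍ) :
    ∃ γ ∈ CongruenceSubgroup.Gamma0 N, ((γ • τ : ℍ) : ℂ) ∈ F := by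
  obtain ⟨a, b, c, d, hdet, hc, h⟩ := hF.2.2.1 τ τ.im_pos
  let p : {p : ℤ × ℤ × ℤ × ℤ // p.1 * p.2.2.2 - p.2.1 * p.2.2.1 = 1 ∧ (N : ℤ) ∣ p.2.2.1} :=
    ⟨(a, b, c, d), hdet, hc⟩
  refine ⟨(gamma0EquivEntries N).symm p, ((gamma0EquivEntries N).symm p).2, ?_⟩
  rw [coe_smul_eq_entries]
  exact h

lemma IsFundDom.smul_eq_self (hF : IsFundDom N F) {τ : ℍ} (hτ : (τ : ℂ) ∈ F) {γ : SL(2, ℤ)}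
    (hγ : γ ∈ CongruenceSubgroup.Gamma0 N) (h : ((γ • τ : ℍ) : ℂ) ∈ F) : γ • τ = τ := by
  have hp := (gamma0EquivEntries N ⟨γ, hγ⟩).2
  apply UpperHalfPlane.ext
  rw [coe_smul_eq_entries] at h ⊢
  exact hF.2.2.2 τ hτ _ _ _ _ hp.1 hp.2 h

lemma unfoldedIntegrand_smul {w n : ℕ} (hnw : n ≤ w)
    (f : CuspForm (CongruenceSubgroup.Gamma0 N) (w + 2)) {γ : SL(2, ℤ)}
    (hγ : γ ∈ CongruenceSubgroup.Gamma0 N) (τ : ℍ) :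
    unfoldedIntegrand w n f ((γ • τ : ℍ) : ℂ) =
      conj (kerTerm (w - n) n γ τ) * f τ * (τ.im : ℂ) ^ (w + 2) := by
  let g : ℍ → ℂ := fun τ ↦ kerTerm (w - n) n 1 τ
  have hu (σ : ℍ) : unfoldedIntegrand w n f σ = petersson (w + 2) g f σ := by
    rw [unfoldedIntegrand, petersson, toC_coe]
    norm_cast
    simp [g, kerTerm]
  have hg : (g ∣[(w + 2 : ℤ)] γ) τ = kerTerm (w - n) n γ τ := by
    rw [ModularForm.SL_slash_apply, ← one_mul γ, ← kerTerm_slash, one_mul]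
    congr 2
    omega
  have hf : (f : ℍ → ℂ) ∣[(w + 2 : ℤ)] γ = f :=
    SlashInvariantForm.slash_action_eqn f _ (Subgroup.mem_map_of_mem _ hγ)
  rw [hu, ← petersson_slash_SL, hf, petersson, hg]
  norm_cast

lemma tsum_unfoldedIntegrand_smul {w n : ℕ} (hnw : n ≤ w)
    (f : CuspForm (CongruenceSubgroup.Gamma0 N) (w + 2)) (τ : ℍ) :
    ∑' γ : CongruenceSubgroup.Gamma0 N, unfoldedIntegrand w n f (((γ : SL(2, ℤ)) • τ : ℍ) : ℂ) =
      conj (kerSeries (CongruenceSubgroup.Gamma0 N) (w - n) n τ) * f τ *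
        (τ.im : ℂ) ^ (w + 2) := by
  rw [kerSeries, Complex.conj_tsum, ← tsum_mul_right, ← tsum_mul_right]
  exact tsum_congr fun γ ↦ unfoldedIntegrand_smul hnw f γ.2 τ

lemma periodInt_eq_pet_Rq {w n : ℕ} (hN : N ≠ 0) (hw : Even w) (hn0 : 0 < n) (hnw : n < w)
    (hF : IsFundDom N F) (f : CuspForm (CongruenceSubgroup.Gamma0 N) (w + 2)) :
    periodInt n f = pet w F f fun τ ↦ Rq N w n τ := by
  have : NeZero N := ⟨hN⟩
  have hc := cconst_ne_zero hnw.le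
  let Φ (z : ℂ) : ℂ := conj (kerSeries (CongruenceSubgroup.Gamma0 N) (w - n) n z) * toC f z *
    (z.im : ℂ) ^ (w + 2)
  have hD : MeasurableSet (((↑) : ℍ → ℂ) ⁻¹' F) := UpperHalfPlane.measurable_coe hF.1
  have hneg : (-1 : SL(2, ℤ)) ∈ CongruenceSubgroup.Gamma0 N := by
    simp [CongruenceSubgroup.Gamma0_mem]
  have hunf := setIntegral_tsum_translates hneg hD hF.exists_smul_mem
    (fun τ hτ γ hγ h ↦ hF.smul_eq_self hτ hγ h) (integrable_unfoldedIntegrand f hn0 hnw)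
  simp only [tsum_unfoldedIntegrand_smul hnw.le] at hunf
  rw [integral_unfoldedIntegrand f hw hn0 hnw, ← mul_assoc, ← cconst_eq] at hunf
  have hΦ : ∫ τ : ℍ in ((↑) : ℍ → ℂ) ⁻¹' F, Φ τ = cconst w n * periodInt n f := by
    rw [← hunf]
    simp only [Φ, toC_coe]
    rfl
  rw [setIntegral_upperHalfPlane Φ hF.1 hF.2.1] at hΦ
  have hpet : pet w F f (fun τ ↦ Rq N w n τ) =
      (cconst w n)⁻¹ * ∫ z in F, ((1 / z.im ^ 2 : ℝ) : ℂ) * Φ z := by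
    rw [pet, ← integral_const_mul]
    refine setIntegral_congr_fun hF.1 fun z hz ↦ ?_
    have hz' : (z.im : ℂ) ≠ 0 := by exact_mod_cast (hF.2.1 z hz).ne'
    simp only [Φ, toC_of_pos _ (hF.2.1 z hz), Rq_eq_kerSeries, map_mul, map_inv₀, conj_cconst hw]
    push_cast
    field_simp
    ring
  rw [hpet, hΦ, inv_mul_cancel_left₀ hc]

end CuspFormPeriods

/-- the series `R_n` is a cusp form of weight `w+2` on `Γ₀(N)` and
represents the period functional: `r_n(f) = ⟨f, R_n⟩` for every cusp form `f` of weight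
`w+2` on `Γ₀(N)` and every measurable fundamental domain. -/
theorem Rn_is_cuspform_and_represents_period (N : ℕ) (hN : 1 ≤ N) (w : ℕ) (hw : 2 ≤ w)
    (hwe : Even w) (n : ℕ) (hn0 : 0 < n) (hnw : n < w) :
    ∃ R : CuspForm (CongruenceSubgroup.Gamma0 N) (w + 2),
      (∀ z : UpperHalfPlane, R z = Rq N w n (z : ℂ)) ∧
      ∀ F : Set ℂ, IsFundDom N F →
        ∀ f : CuspForm (CongruenceSubgroup.Gamma0 N) (w + 2),
          periodInt n f = pet w F f R := by
  have : NeZero N := ⟨by omega⟩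
  let R := kerCuspForm N w (w - n) n (by omega) hn0 (by omega) (cconst w n)⁻¹
  have hR (z : UpperHalfPlane) : R z = Rq N w n z := (Rq_eq_kerSeries N w n z).symm
  refine ⟨R, hR, fun F hF f ↦ ?_⟩
  rw [funext hR]
  exact periodInt_eq_pet_Rq (by omega) hwe hn0 hnw hF f

end
end

section
/- Let w ≥ 2 be even, let n be an integer with 0 < n < w, set ñ = w − n, let D > 1 and let h be an integer with D ∤ h. Define S_{1,h}(z) = 2·(−1)^{n+1}·Σ_{d ∈ ℤ} 1/(z + h/D + d)^{n+1} for z in the upper half-plane, and F_{1,h}(X) = ∫₀^{i∞} S_{1,h}(z)(X−z)^w dz + (−1)^{n−1}·∫₀^{i∞} S_{1,−h}(z)(X+z)^w dz. Then for every complex number X: F_{1,h}(X) = c_n·(−1)^n·(2i)^{w+1}·B_{ñ+1}({h/D} + X)/(ñ+1), where c_n = (−1)^n·4πi·(2i)^{−w−1}·C(w,n). -/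
open MeasureTheory Complex Real

noncomputable section

/-- The contour integral `∫₀^{i∞} F(z) dz` along the positive imaginary axis `z = iy`. -/
def intI (F : ℂ → ℂ) : ℂ := Complex.I * ∫ y in Set.Ioi (0 : ℝ), F (Complex.I * y)

/-- The `k`-th Bernoulli polynomial evaluated at a complex number. -/
def bpoly (k : ℕ) (x : ℂ) : ℂ := Polynomial.aeval x (Polynomial.bernoulli k)

/-- `S_{1,h}(z) = 2(−1)^{n+1} Σ_{d ∈ ℤ} 1/(z + h/D + d)^{n+1}`. -/
def S1 (D : ℕ) (n : ℕ) (h : ℤ) (z : ℂ) : ℂ :=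
  2 * (-1) ^ (n + 1) * ∑' d : ℤ, 1 / (z + (h : ℂ) / D + d) ^ (n + 1)

/-- The lattice sum `∑ 1 / (u + d) ^ (n + 1)` over `d ∈ ℤ`. -/
def latticeSum (n : ℕ) (u : ℂ) : ℂ := ∑' d : ℤ, 1 / (u + d) ^ (n + 1)

/-- The lattice sum with the term `d = 0` removed. -/
def latticeSumReg (n : ℕ) (u : ℂ) : ℂ :=
  ∑' d : ℤ, if d = 0 then 0 else 1 / (u + d) ^ (n + 1)

lemma latticeSum_add_int (n : ℕ) (u : ℂ) (m : ℤ) :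
    latticeSum n (u + m) = latticeSum n u := by
  unfold latticeSum
  rw [← (Equiv.addLeft m).tsum_eq (fun d : ℤ => 1 / (u + d) ^ (n + 1))]
  simp [add_assoc]

lemma latticeSum_neg (n : ℕ) (u : ℂ) :
    latticeSum n (-u) = (-1) ^ (n + 1) * latticeSum n u := by
  unfold latticeSum
  rw [← (Equiv.neg ℤ).tsum_eq, ← tsum_mul_left]
  refine tsum_congr fun d => ?_
  have : (-u + ((-d : ℤ) : ℂ)) = -1 * (u + d) := by push_cast; ring
  rw [Equiv.neg_apply, this, mul_pow, one_div, mul_inv, ← inv_pow, one_div]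
  norm_num

lemma norm_latticeSumReg_term_le (n : ℕ) {ρ : ℝ} (hρ : ρ < 1) {u : ℂ} (hu : |u.re| ≤ ρ)
    (d : ℤ) :
    ‖(if d = 0 then 0 else 1 / (u + d) ^ (n + 1) : ℂ)‖ ≤
      ((1 - ρ) ^ (n + 1))⁻¹ * |1 / (d : ℝ) ^ (n + 1)| := by
  have h1 : 0 < 1 - ρ := by linarith
  split_ifs with hd
  · simp only [norm_zero]; positivity
  · have hd1 : (1 : ℝ) ≤ |(d : ℝ)| := by exact_mod_cast Int.one_le_abs hd
    have hre : (1 - ρ) * |(d : ℝ)| ≤ ‖u + d‖ := by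
      have h2 : |(d : ℝ)| - |u.re| ≤ |u.re + d| := by
        have := abs_sub (u.re + d) u.re
        simp only [add_sub_cancel_left] at this
        linarith
      have h3 : |u.re + d| ≤ ‖u + d‖ := by simpa using Complex.abs_re_le_norm (u + d)
      have h4 : 0 ≤ |u.re| := abs_nonneg _
      nlinarith
    rw [norm_div, norm_one, norm_pow, abs_div, abs_one, abs_pow, one_div, one_div, ← mul_inv,
      ← mul_pow]
    gcongr

lemma summable_abs_one_div_int_pow {n : ℕ} (hn : 0 < n) :
    Summable fun d : ℤ => |1 / (d : ℝ) ^ (n + 1)| :=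
  (Real.summable_one_div_int_pow.mpr (by omega)).abs

lemma differentiableAt_latticeSumReg {n : ℕ} (hn : 0 < n) {u : ℂ} (hu : |u.re| < 1) :
    DifferentiableAt ℂ (latticeSumReg n) u := by
  obtain ⟨ρ, h1, h2⟩ := exists_between hu
  have hU : IsOpen {v : ℂ | |v.re| < ρ} :=
    isOpen_lt (continuous_abs.comp Complex.continuous_re) continuous_const
  refine DifferentiableOn.differentiableAt (s := {v : ℂ | |v.re| < ρ}) ?_ (hU.mem_nhds h1)
  refine differentiableOn_tsum_of_summable_norm
    ((summable_abs_one_div_int_pow hn).mul_left _) (fun d => ?_) hU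
    fun d v hv => norm_latticeSumReg_term_le n h2 (le_of_lt hv) d
  split_ifs with hd
  · exact differentiableOn_const _
  · intro v hv
    have : v + d ≠ 0 := by
      intro h0
      have h3 : v.re = -d := by
        have := congrArg Complex.re h0
        simp at this; linarith
      have hd1 : (1 : ℝ) ≤ |(d : ℝ)| := by exact_mod_cast Int.one_le_abs hd
      have h4 : |v.re| < ρ := hv
      rw [h3, abs_neg] at h4
      linarith
    refine DifferentiableAt.differentiableWithinAt ?_
    fun_prop (disch := exact pow_ne_zero _ this)

lemma latticeSum_eq_add_reg {n : ℕ} (hn : 0 < n) {u : ℂ} (hu : |u.re| < 1) :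
    latticeSum n u = 1 / u ^ (n + 1) + latticeSumReg n u := by
  have hs : Summable fun d : ℤ => (if d = 0 then 0 else 1 / (u + d) ^ (n + 1) : ℂ) :=
    Summable.of_norm_bounded ((summable_abs_one_div_int_pow hn).mul_left _)
      fun d => norm_latticeSumReg_term_le n hu le_rfl d
  have hs' : Summable fun d : ℤ => 1 / (u + d) ^ (n + 1) := by
    have := hs.add (hasSum_ite_eq (0 : ℤ) (1 / u ^ (n + 1))).summable
    refine this.congr fun d => ?_
    by_cases hd : d = 0 <;> simp [hd]
  unfold latticeSum latticeSumReg
  rw [hs'.tsum_eq_add_tsum_ite 0]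
  simp

lemma norm_latticeSum_le_of_one_le_im {n : ℕ} (hn : 0 < n) :
    ∃ C, 0 ≤ C ∧ ∀ u : ℂ, 1 ≤ u.im → ‖latticeSum n u‖ ≤ C * Real.exp (-(2 * u.im)) := by
  set r : ℝ := Real.exp (-4) with hr
  have hr0 : 0 < r := Real.exp_pos _
  have hr1 : r < 1 := by rw [hr, Real.exp_lt_one_iff]; norm_num
  have hsum : Summable fun m : ℕ => (m : ℝ) ^ n * r ^ m :=
    summable_pow_mul_geometric_of_norm_lt_one n (by rwa [Real.norm_of_nonneg hr0.le])
  refine ⟨‖((-2 * π * I) ^ (n + 1) / n.factorial : ℂ)‖ *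
    ∑' m : ℕ, (m : ℝ) ^ n * r ^ m, by positivity, fun u hu => ?_⟩
  have key := EisensteinSeries.qExpansion_identity hn ⟨u, by linarith⟩
  have hterm : ∀ m : ℕ, ‖(m : ℂ) ^ n * cexp (2 * π * I * u) ^ m‖ ≤
      ((m : ℝ) ^ n * r ^ m) * Real.exp (-(2 * u.im)) := by
    intro m
    rcases Nat.eq_zero_or_pos m with rfl | hm
    · simp [hn.ne']
    rw [norm_mul, norm_pow, Complex.norm_natCast, norm_pow, mul_assoc ((m : ℝ) ^ n)]
    gcongr
    have hq : ‖cexp (2 * π * I * u)‖ = Real.exp (-(2 * π * u.im)) := by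
      rw [Complex.norm_exp]; simp
    rw [hq, hr, ← Real.exp_nat_mul, ← Real.exp_nat_mul, ← Real.exp_add]
    apply Real.exp_le_exp.mpr
    have hm1 : (1 : ℝ) ≤ m := by exact_mod_cast hm
    have h3 := Real.pi_gt_three
    have : (6 : ℝ) * u.im ≤ 2 * π * u.im := by nlinarith
    nlinarith [mul_le_mul_of_nonneg_left this (by linarith : (0 : ℝ) ≤ m),
      mul_nonneg (by linarith : (0 : ℝ) ≤ m - 1) (by linarith : (0 : ℝ) ≤ u.im)]
  have hle : ‖∑' m : ℕ, (m : ℂ) ^ n * cexp (2 * π * I * u) ^ m‖ ≤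
      (∑' m : ℕ, (m : ℝ) ^ n * r ^ m) * Real.exp (-(2 * u.im)) := by
    rw [← tsum_mul_right]
    exact tsum_of_norm_bounded (hsum.mul_right _).hasSum hterm
  unfold latticeSum
  change (∑' d : ℤ, 1 / (u + d) ^ (n + 1)) =
    _ * ∑' m : ℕ, (m : ℂ) ^ n * cexp (2 * π * I * u) ^ m at key
  rw [key, norm_mul, mul_assoc ‖_‖]
  exact mul_le_mul_of_nonneg_left hle (norm_nonneg _)

lemma norm_latticeSum_le_of_one_le_abs_im {n : ℕ} (hn : 0 < n) :
    ∃ C, 0 ≤ C ∧ ∀ u : ℂ, 1 ≤ |u.im| → ‖latticeSum n u‖ ≤ C * Real.exp (-(2 * |u.im|)) := by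
  obtain ⟨C, hC, h⟩ := norm_latticeSum_le_of_one_le_im hn
  refine ⟨C, hC, fun u hu => ?_⟩
  rcases le_total 0 u.im with h0 | h0
  · rw [abs_of_nonneg h0] at hu ⊢
    exact h u hu
  · rw [abs_of_nonpos h0] at hu ⊢
    have := h (-u) (by simpa using hu)
    rw [latticeSum_neg] at this
    simpa using this

lemma norm_polynomial_eval_le_exp (P : Polynomial ℂ) :
    ∃ C, 0 ≤ C ∧ ∀ u : ℂ, |u.re| ≤ 1 → ‖P.eval u‖ ≤ C * Real.exp |u.im| := by
  refine ⟨∑ k ∈ Finset.range (P.natDegree + 1), ‖P.coeff k‖ * (k.factorial * Real.exp 1),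
    by positivity, fun u hu => ?_⟩
  rw [Polynomial.eval_eq_sum_range, Finset.sum_mul]
  refine (norm_sum_le _ _).trans (Finset.sum_le_sum fun k _ => ?_)
  rw [norm_mul, norm_pow, mul_assoc]
  gcongr
  have h1 : ‖u‖ ≤ 1 + |u.im| := (Complex.norm_le_abs_re_add_abs_im u).trans (by linarith)
  have h2 := Real.pow_div_factorial_le_exp (1 + |u.im|) (by positivity) k
  rw [div_le_iff₀ (by positivity), Real.exp_add] at h2
  calc ‖u‖ ^ k ≤ (1 + |u.im|) ^ k := by gcongr
    _ ≤ _ := by linarith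

lemma norm_latticeSum_mul_eval_le {n : ℕ} (hn : 0 < n) (P : Polynomial ℂ) :
    ∃ C, 0 ≤ C ∧ ∀ u : ℂ, |u.re| ≤ 1 → 1 ≤ |u.im| →
      ‖latticeSum n u * P.eval u‖ ≤ C * Real.exp (-|u.im|) := by
  obtain ⟨A, hA, hA'⟩ := norm_latticeSum_le_of_one_le_abs_im hn
  obtain ⟨B, hB, hB'⟩ := norm_polynomial_eval_le_exp P
  refine ⟨A * B, by positivity, fun u h1 h2 => ?_⟩
  rw [norm_mul]
  calc _ ≤ (A * Real.exp (-(2 * |u.im|))) * (B * Real.exp |u.im|) := by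
        gcongr
        exacts [hA' u h2, hB' u h1]
    _ = A * B * (Real.exp (-(2 * |u.im|)) * Real.exp |u.im|) := by ring
    _ = _ := by rw [← Real.exp_add]; congr 2; ring

/-- The integral of `f` along the boundary of the rectangle `[a, b] × [-R, R]`, traversed
counterclockwise. -/
def rectIntegral (f : ℂ → ℂ) (a b R : ℝ) : ℂ :=
  (∫ x : ℝ in a..b, f (x + (-R : ℝ) * I)) - (∫ x : ℝ in a..b, f (x + R * I)) +
    I * (∫ y : ℝ in (-R)..R, f (b + y * I)) - I * (∫ y : ℝ in (-R)..R, f (a + y * I))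

/-- The strip `|Re u| < 1` with the origin removed. -/
def puncturedStrip : Set ℂ := {u | |u.re| < 1 ∧ u ≠ 0}

section
variable {a b R : ℝ}

lemma horizontal_mem_puncturedStrip (ha : -1 < a) (hab : a ≤ b) (hb : b < 1) (hR : R ≠ 0)
    {x : ℝ} (hx : x ∈ Set.uIcc a b) : (x + R * I : ℂ) ∈ puncturedStrip := by
  rw [Set.uIcc_of_le hab] at hx
  refine ⟨?_, fun h => hR ?_⟩
  · simp [abs_lt]; constructor <;> linarith [hx.1, hx.2]
  · simpa using congrArg Complex.im h

lemma vertical_mem_puncturedStrip (ha : |a| < 1) (ha0 : a ≠ 0) (y : ℝ) :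
    (a + y * I : ℂ) ∈ puncturedStrip := by
  refine ⟨by simpa using ha, fun h => ha0 ?_⟩
  simpa using congrArg Complex.re h

lemma ContinuousOn.comp_horizontal {f : ℂ → ℂ} (hf : ContinuousOn f puncturedStrip)
    (ha : -1 < a) (hab : a ≤ b) (hb : b < 1) (hR : R ≠ 0) :
    ContinuousOn (fun x : ℝ => f (x + R * I)) (Set.uIcc a b) :=
  hf.comp (by fun_prop) fun _ hx => horizontal_mem_puncturedStrip ha hab hb hR hx

lemma ContinuousOn.comp_vertical {f : ℂ → ℂ} (hf : ContinuousOn f puncturedStrip)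
    (ha : |a| < 1) (ha0 : a ≠ 0) : Continuous (fun y : ℝ => f (a + y * I)) :=
  hf.comp_continuous (by fun_prop) fun y => vertical_mem_puncturedStrip ha ha0 y

lemma rectIntegral_congr {f g : ℂ → ℂ} (hfg : Set.EqOn f g puncturedStrip)
    (ha : -1 < a) (ha0 : a < 0) (hb0 : 0 < b) (hb : b < 1) (hR : 0 < R) :
    rectIntegral f a b R = rectIntegral g a b R := by
  have hab : a ≤ b := by linarith
  unfold rectIntegral
  congr 1
  · congr 1
    · congr 1 <;> refine intervalIntegral.integral_congr fun x hx => hfg ?_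
      · exact horizontal_mem_puncturedStrip ha hab hb (by linarith) hx
      · exact horizontal_mem_puncturedStrip ha hab hb hR.ne' hx
    · congr 1
      exact intervalIntegral.integral_congr fun y _ => hfg <|
        vertical_mem_puncturedStrip (by rw [abs_lt]; constructor <;> linarith) hb0.ne' y
  · congr 1
    exact intervalIntegral.integral_congr fun y _ => hfg <|
      vertical_mem_puncturedStrip (by rw [abs_lt]; constructor <;> linarith) ha0.ne y

lemma rectIntegral_add {f g : ℂ → ℂ} (hf : ContinuousOn f puncturedStrip)
    (hg : ContinuousOn g puncturedStrip)
    (ha : -1 < a) (ha0 : a < 0) (hb0 : 0 < b) (hb : b < 1) (hR : 0 < R) :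
    rectIntegral (fun u => f u + g u) a b R = rectIntegral f a b R + rectIntegral g a b R := by
  have hab : a ≤ b := by linarith
  have ha1 : |a| < 1 := by rw [abs_lt]; constructor <;> linarith
  have hb1 : |b| < 1 := by rw [abs_lt]; constructor <;> linarith
  have hR' : -R ≠ 0 := by linarith
  unfold rectIntegral
  rw [intervalIntegral.integral_add (hf.comp_horizontal ha hab hb hR').intervalIntegrable
      (hg.comp_horizontal ha hab hb hR').intervalIntegrable,
    intervalIntegral.integral_add (hf.comp_horizontal ha hab hb hR.ne').intervalIntegrable
      (hg.comp_horizontal ha hab hb hR.ne').intervalIntegrable,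
    intervalIntegral.integral_add ((hf.comp_vertical hb1 hb0.ne').intervalIntegrable _ _)
      ((hg.comp_vertical hb1 hb0.ne').intervalIntegrable _ _),
    intervalIntegral.integral_add ((hf.comp_vertical ha1 ha0.ne).intervalIntegrable _ _)
      ((hg.comp_vertical ha1 ha0.ne).intervalIntegrable _ _)]
  ring

lemma rectIntegral_const_mul (c : ℂ) (f : ℂ → ℂ) :
    rectIntegral (fun u => c * f u) a b R = c * rectIntegral f a b R := by
  simp only [rectIntegral, intervalIntegral.integral_const_mul]
  ring

lemma integral_horizontal_of_hasDerivAt {f F : ℂ → ℂ}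
    (hF : ∀ x ∈ Set.uIcc a b, HasDerivAt F (f (x + R * I)) (x + R * I))
    (hf : ContinuousOn (fun x : ℝ => f (x + R * I)) (Set.uIcc a b)) :
    ∫ x : ℝ in a..b, f (x + R * I) = F (b + R * I) - F (a + R * I) := by
  refine intervalIntegral.integral_eq_sub_of_hasDerivAt (f := fun x : ℝ => F (x + R * I))
    (fun x hx => ?_) hf.intervalIntegrable
  have h : HasDerivAt (fun x : ℝ => (x + R * I : ℂ)) 1 x :=
    (Complex.ofRealCLM.hasDerivAt (x := x)).add_const _
  have := (hF x hx).comp x h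
  rw [mul_one] at this
  exact this

lemma integral_vertical_of_hasDerivAt {f F : ℂ → ℂ} {s t : ℝ}
    (hF : ∀ y : ℝ, HasDerivAt F (f (a + y * I)) (a + y * I))
    (hf : Continuous (fun y : ℝ => f (a + y * I))) :
    I * ∫ y : ℝ in s..t, f (a + y * I) = F (a + t * I) - F (a + s * I) := by
  rw [← intervalIntegral.integral_const_mul]
  refine intervalIntegral.integral_eq_sub_of_hasDerivAt (f := fun y : ℝ => F (a + y * I))
    (fun y _ => ?_) ((continuous_const.mul hf).intervalIntegrable _ _)
  have h : HasDerivAt (fun y : ℝ => (a + y * I : ℂ)) I y := by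
    simpa using ((Complex.ofRealCLM.hasDerivAt (x := y)).mul_const I).const_add (a : ℂ)
  have := (hF y).comp y h
  rw [mul_comm] at this
  exact this

lemma rectIntegral_eq_zero_of_hasDerivAt {f F : ℂ → ℂ} (hf : ContinuousOn f puncturedStrip)
    (hF : ∀ u ∈ puncturedStrip, HasDerivAt F (f u) u)
    (ha : -1 < a) (ha0 : a < 0) (hb0 : 0 < b) (hb : b < 1) (hR : 0 < R) :
    rectIntegral f a b R = 0 := by
  have hab : a ≤ b := by linarith
  have ha1 : |a| < 1 := by rw [abs_lt]; constructor <;> linarith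
  have hb1 : |b| < 1 := by rw [abs_lt]; constructor <;> linarith
  have hR' : -R ≠ 0 := by linarith
  unfold rectIntegral
  rw [integral_horizontal_of_hasDerivAt (F := F)
      (fun x hx => hF _ (horizontal_mem_puncturedStrip ha hab hb hR' hx))
      (hf.comp_horizontal ha hab hb hR'),
    integral_horizontal_of_hasDerivAt (F := F)
      (fun x hx => hF _ (horizontal_mem_puncturedStrip ha hab hb hR.ne' hx))
      (hf.comp_horizontal ha hab hb hR.ne'),
    integral_vertical_of_hasDerivAt (F := F)
      (fun y => hF _ (vertical_mem_puncturedStrip hb1 hb0.ne' y)) (hf.comp_vertical hb1 hb0.ne'),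
    integral_vertical_of_hasDerivAt (F := F)
      (fun y => hF _ (vertical_mem_puncturedStrip ha1 ha0.ne y)) (hf.comp_vertical ha1 ha0.ne)]
  ring

lemma rectIntegral_eq_zero_of_differentiable {f : ℂ → ℂ}
    (hf : ∀ u : ℂ, |u.re| < 1 → DifferentiableAt ℂ f u)
    (ha : -1 < a) (hab : a ≤ b) (hb : b < 1) :
    rectIntegral f a b R = 0 := by
  have := Complex.integral_boundary_rect_eq_zero_of_differentiableOn f
    ⟨a, -R⟩ ⟨b, R⟩ (fun u hu => (hf u ?_).differentiableWithinAt)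
  · simpa [rectIntegral] using this
  · have h := hu.1
    simp only [Set.mem_preimage, Set.uIcc_of_le hab] at h
    rw [abs_lt]
    constructor <;> linarith [h.1, h.2]

lemma log_neg_of_im_pos {z : ℂ} (hz : 0 < z.im) : Complex.log (-z) = Complex.log z - π * I := by
  simp only [Complex.log, norm_neg, arg_neg_eq_arg_sub_pi_of_im_pos hz]
  push_cast; ring

lemma log_neg_of_im_neg {z : ℂ} (hz : z.im < 0) : Complex.log (-z) = Complex.log z + π * I := by
  simp only [Complex.log, norm_neg, arg_neg_eq_arg_add_pi_of_im_neg hz]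
  push_cast; ring

lemma continuousOn_inv_puncturedStrip : ContinuousOn (fun u : ℂ => u⁻¹) puncturedStrip :=
  continuousOn_inv₀.mono fun _ hu => hu.2

lemma rectIntegral_inv (ha : -1 < a) (ha0 : a < 0) (hb0 : 0 < b) (hb : b < 1) (hR : 0 < R) :
    rectIntegral (fun u => u⁻¹) a b R = 2 * π * I := by
  have hab : a ≤ b := by linarith
  have ha1 : |a| < 1 := by rw [abs_lt]; constructor <;> linarith
  have hb1 : |b| < 1 := by rw [abs_lt]; constructor <;> linarith
  have hR' : -R ≠ 0 := by linarith
  have hc := continuousOn_inv_puncturedStrip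
  unfold rectIntegral
  rw [integral_horizontal_of_hasDerivAt (f := fun u => u⁻¹) (F := Complex.log)
      (fun x _ => Complex.hasDerivAt_log (Or.inr (by simpa using hR.ne')))
      (hc.comp_horizontal ha hab hb hR'),
    integral_horizontal_of_hasDerivAt (f := fun u => u⁻¹) (F := Complex.log)
      (fun x _ => Complex.hasDerivAt_log (Or.inr (by simpa using hR.ne')))
      (hc.comp_horizontal ha hab hb hR.ne'),
    integral_vertical_of_hasDerivAt (f := fun u => u⁻¹) (F := Complex.log)
      (fun y => Complex.hasDerivAt_log (Or.inl (by simpa using hb0)))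
      (hc.comp_vertical hb1 hb0.ne'),
    integral_vertical_of_hasDerivAt (f := fun u => u⁻¹) (F := fun u => Complex.log (-u))
      (fun y => ?_) (hc.comp_vertical ha1 ha0.ne),
    log_neg_of_im_pos (by simpa using hR), log_neg_of_im_neg (by simpa using hR)]
  · ring
  · have := (hasDerivAt_neg (a + y * I : ℂ)).clog (Or.inl (by simpa using ha0))
    convert this using 1
    rw [neg_div_neg_eq, one_div]

lemma rectIntegral_eval_div_pow (P : Polynomial ℂ) (n : ℕ)
    (ha : -1 < a) (ha0 : a < 0) (hb0 : 0 < b) (hb : b < 1) (hR : 0 < R) :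
    rectIntegral (fun u => P.eval u / u ^ (n + 1)) a b R = 2 * π * I * P.coeff n := by
  induction P using Polynomial.induction_on' with
  | add p q hp hq =>
    simp only [Polynomial.eval_add, add_div, Polynomial.coeff_add, mul_add]
    rw [rectIntegral_add _ _ ha ha0 hb0 hb hR, hp, hq] <;>
    · refine ContinuousOn.div (by fun_prop) (by fun_prop) fun u hu => pow_ne_zero _ hu.2
  | monomial k c =>
    rw [Polynomial.coeff_monomial]
    by_cases hk : k = n
    · subst hk
      rw [if_pos rfl, rectIntegral_congr (g := fun u => c * u⁻¹) (fun u hu => ?_) ha ha0 hb0 hb hR,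
        rectIntegral_const_mul, rectIntegral_inv ha ha0 hb0 hb hR, mul_comm]
      have := hu.2
      simp only [Polynomial.eval_monomial]
      field_simp
      ring
    · have hk' : ((k : ℤ) - n : ℂ) ≠ 0 := by
        rw [sub_ne_zero]; exact_mod_cast hk
      rw [if_neg hk, mul_zero]
      refine rectIntegral_eq_zero_of_hasDerivAt
        (F := fun u => c / ((k : ℤ) - n) * u ^ ((k : ℤ) - n)) ?_ (fun u hu => ?_) ha ha0 hb0 hb hR
      · refine ContinuousOn.div (by fun_prop) (by fun_prop) fun u hu => pow_ne_zero _ hu.2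
      · have := (hasDerivAt_zpow ((k : ℤ) - n) u (Or.inl hu.2)).const_mul (c / ((k : ℤ) - n))
        refine this.congr_deriv ?_
        rw [Polynomial.eval_monomial, show (k : ℤ) - n - 1 = k - (n + 1 : ℕ) by push_cast; ring,
          zpow_sub₀ hu.2, zpow_natCast, zpow_natCast]
        push_cast at hk' ⊢
        field_simp
end

lemma bpoly_one_add (k : ℕ) (x : ℂ) : bpoly k (1 + x) = bpoly k x + k * x ^ (k - 1) := by
  have := congrArg (Polynomial.aeval x) (Polynomial.bernoulli_comp_one_add_X k)
  simpa [bpoly, Polynomial.aeval_comp] using this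

lemma hasseDeriv_bernoulli (k m : ℕ) :
    Polynomial.hasseDeriv k (Polynomial.bernoulli m) =
      Polynomial.C (m.choose k : ℚ) * Polynomial.bernoulli (m - k) := by
  ext i
  rw [Polynomial.hasseDeriv_coeff, Polynomial.coeff_C_mul, Polynomial.coeff_bernoulli,
    Polynomial.coeff_bernoulli]
  by_cases h : i + k ≤ m
  · rw [if_pos h, if_pos (by omega), show m - k - i = m - (i + k) by omega]
    have := Nat.choose_mul (n := m) (k := i + k) (s := k) (by omega)
    rw [Nat.add_sub_cancel] at this
    have h2 : ((m.choose (i + k) : ℚ) * (i + k).choose k) = m.choose k * (m - k).choose i := by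
      exact_mod_cast this
    linear_combination (_root_.bernoulli (m - (i + k))) * h2
  · rw [if_neg h]
    by_cases hk : k ≤ m
    · rw [if_neg (by omega)]; simp
    · rw [Nat.choose_eq_zero_of_lt (by omega : m < k)]; simp

lemma hasseDeriv_map {R S : Type*} [Semiring R] [Semiring S] (f : R →+* S) (k : ℕ)
    (p : Polynomial R) :
    Polynomial.hasseDeriv k (p.map f) = (Polynomial.hasseDeriv k p).map f := by
  ext i
  simp [Polynomial.hasseDeriv_coeff]

lemma coeff_comp_C_sub_X {R : Type*} [CommRing R] (p : Polynomial R) (s : R) (n : ℕ) :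
    (p.comp (Polynomial.C s - Polynomial.X)).coeff n =
      (-1) ^ n * (Polynomial.hasseDeriv n p).eval s := by
  have : p.comp (Polynomial.C s - Polynomial.X) =
      (Polynomial.taylor s p).comp (Polynomial.C (-1) * Polynomial.X) := by
    rw [Polynomial.taylor_apply, Polynomial.comp_assoc]
    simp [sub_eq_neg_add]
  rw [this, Polynomial.comp_C_mul_X_coeff, Polynomial.taylor_coeff, mul_comm]

/-- A polynomial `P` with `P u - P (u - 1) = (s - u) ^ w`. -/
def bernoulliPrimitive (w : ℕ) (s : ℂ) : Polynomial ℂ :=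
  Polynomial.C (-(w + 1 : ℂ)⁻¹) *
    ((Polynomial.bernoulli (w + 1)).map (algebraMap ℚ ℂ)).comp (Polynomial.C s - Polynomial.X)

lemma eval_bernoulliPrimitive (w : ℕ) (s u : ℂ) :
    (bernoulliPrimitive w s).eval u = -(w + 1 : ℂ)⁻¹ * bpoly (w + 1) (s - u) := by
  simp [bernoulliPrimitive, bpoly, Polynomial.eval_map_algebraMap]

lemma eval_bernoulliPrimitive_sub (w : ℕ) (s u : ℂ) :
    (bernoulliPrimitive w s).eval u - (bernoulliPrimitive w s).eval (u - 1) = (s - u) ^ w := by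
  rw [eval_bernoulliPrimitive, eval_bernoulliPrimitive, show s - (u - 1) = 1 + (s - u) by ring,
    bpoly_one_add]
  have : (w + 1 : ℂ) ≠ 0 := Nat.cast_add_one_ne_zero w
  push_cast [Nat.add_sub_cancel]
  field_simp
  ring

lemma coeff_bernoulliPrimitive {w n : ℕ} (hn : n ≤ w) (s : ℂ) :
    (bernoulliPrimitive w s).coeff n =
      -(-1) ^ n * w.choose n * bpoly (w - n + 1) s / (w - n + 1) := by
  rw [bernoulliPrimitive, Polynomial.coeff_C_mul, coeff_comp_C_sub_X, hasseDeriv_map,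
    hasseDeriv_bernoulli, show w + 1 - n = w - n + 1 by omega, Polynomial.eval_map_algebraMap,
    map_mul, Polynomial.aeval_C, ← bpoly]
  have h1 : (w + 1 : ℂ) ≠ 0 := Nat.cast_add_one_ne_zero w
  have h2 : (w - n + 1 : ℂ) ≠ 0 := by
    rw [← Nat.cast_sub hn]; exact Nat.cast_add_one_ne_zero _
  have h3 : ((w + 1).choose n : ℂ) * (w - n + 1) = w.choose n * (w + 1) := by
    have := Nat.choose_mul_succ_eq w n
    rw [show w + 1 - n = w - n + 1 by omega] at this
    have h4 : (w.choose n * (w + 1) : ℂ) = (w + 1).choose n * ((w - n : ℕ) + 1) := by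
      exact_mod_cast this
    rw [h4, Nat.cast_sub hn]
  simp only [map_natCast]
  field_simp
  linear_combination (-bpoly (w - n + 1) s) * h3

lemma ContinuousOn.latticeSum_mul_eval {n : ℕ} (hn : 0 < n) (P : Polynomial ℂ) :
    ContinuousOn (fun u => latticeSum n u * P.eval u) puncturedStrip := by
  have h : ContinuousOn (fun u => (1 / u ^ (n + 1) + latticeSumReg n u) * P.eval u)
      puncturedStrip := by
    refine (ContinuousOn.add (ContinuousOn.div continuousOn_const (by fun_prop)
      fun u hu => pow_ne_zero _ hu.2) fun u hu => ?_).mul P.continuous.continuousOn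
    exact (differentiableAt_latticeSumReg hn hu.1).continuousAt.continuousWithinAt
  refine h.congr fun u hu => ?_
  simp only [latticeSum_eq_add_reg hn hu.1]

lemma rectIntegral_latticeSum {n : ℕ} (hn : 0 < n) (P : Polynomial ℂ) {a b R : ℝ}
    (ha : -1 < a) (ha0 : a < 0) (hb0 : 0 < b) (hb : b < 1) (hR : 0 < R) :
    rectIntegral (fun u => latticeSum n u * P.eval u) a b R = 2 * π * I * P.coeff n := by
  have hd : ∀ u : ℂ, |u.re| < 1 → DifferentiableAt ℂ (fun u => latticeSumReg n u * P.eval u) u :=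
    fun u hu => (differentiableAt_latticeSumReg hn hu).mul P.differentiableAt
  rw [rectIntegral_congr (g := fun u => P.eval u / u ^ (n + 1) + latticeSumReg n u * P.eval u)
      (fun u hu => ?_) ha ha0 hb0 hb hR,
    rectIntegral_add (f := fun u => P.eval u / u ^ (n + 1))
      (ContinuousOn.div (by fun_prop) (by fun_prop) fun u hu => pow_ne_zero _ hu.2)
      (fun u hu => (hd u hu.1).continuousAt.continuousWithinAt) ha ha0 hb0 hb hR,
    rectIntegral_eval_div_pow P n ha ha0 hb0 hb hR,
    rectIntegral_eq_zero_of_differentiable hd ha (by linarith) hb, add_zero]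
  simp only [latticeSum_eq_add_reg hn hu.1]
  ring

lemma integrable_of_norm_le_exp_neg_abs {f : ℝ → ℂ} (hf : Continuous f) {C : ℝ}
    (hC : ∀ y, 1 ≤ |y| → ‖f y‖ ≤ C * Real.exp (-|y|)) : Integrable f := by
  refine hf.locallyIntegrable.integrable_of_isBigO_atBot_atTop
    (g := Real.exp) (g' := fun y => Real.exp (-y)) ?_ ?_ ?_ ?_
  · refine Asymptotics.IsBigO.of_bound C ?_
    filter_upwards [Filter.eventually_le_atBot (-1)] with y hy
    have := hC y (by rw [abs_of_nonpos (by linarith)]; linarith)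
    rwa [abs_of_nonpos (by linarith), neg_neg, ← Real.norm_of_nonneg (Real.exp_pos y).le] at this
  · exact ⟨Set.Iic 0, Filter.Iic_mem_atBot 0, integrableOn_exp_Iic 0⟩
  · refine Asymptotics.IsBigO.of_bound C ?_
    filter_upwards [Filter.eventually_ge_atTop 1] with y hy
    have := hC y (by rw [abs_of_nonneg (by linarith)]; linarith)
    rwa [abs_of_nonneg (by linarith), ← Real.norm_of_nonneg (Real.exp_pos (-y)).le] at this
  · exact ⟨Set.Ioi 0, Filter.Ioi_mem_atTop 0, integrableOn_exp_neg_Ioi 0⟩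

lemma integrable_latticeSum_mul_eval {n : ℕ} (hn : 0 < n) (P : Polynomial ℂ) {a : ℝ}
    (ha : |a| < 1) (ha0 : a ≠ 0) :
    Integrable fun y : ℝ => latticeSum n (a + y * I) * P.eval (a + y * I) := by
  obtain ⟨C, -, hC⟩ := norm_latticeSum_mul_eval_le hn P
  refine integrable_of_norm_le_exp_neg_abs (C := C)
    ((ContinuousOn.latticeSum_mul_eval hn P).comp_vertical ha ha0) fun y hy => ?_
  simpa using hC (a + y * I) (by simpa using ha.le) (by simpa using hy)

lemma tendsto_integral_horizontal_latticeSum {n : ℕ} (hn : 0 < n) (P : Polynomial ℂ) {a b : ℝ}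
    (ha : -1 < a) (hab : a ≤ b) (hb : b < 1) {σ : ℝ} (hσ : |σ| = 1) :
    Filter.Tendsto (fun R : ℝ => ∫ x : ℝ in a..b,
      latticeSum n (x + (σ * R : ℝ) * I) * P.eval (x + (σ * R : ℝ) * I))
      Filter.atTop (nhds 0) := by
  obtain ⟨C, -, hC⟩ := norm_latticeSum_mul_eval_le hn P
  refine squeeze_zero_norm' (a := fun R : ℝ => C * Real.exp (-R) * |b - a|) ?_ ?_
  · filter_upwards [Filter.eventually_ge_atTop 1] with R hR
    refine intervalIntegral.norm_integral_le_of_norm_le_const fun x hx => ?_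
    rw [Set.uIoc_of_le hab] at hx
    have hσR : |σ * R| = R := by rw [abs_mul, hσ, one_mul, abs_of_nonneg (by linarith)]
    have := hC (x + (σ * R : ℝ) * I) (by
      simp only [add_re, ofReal_re, mul_re, I_re, mul_zero, ofReal_im, I_im, sub_self, add_zero,
        zero_mul]
      rw [abs_le]; constructor <;> linarith [hx.1, hx.2])
      (by simpa [← ofReal_mul, -ofReal_mul, hσR] using hR)
    simpa [-ofReal_mul, hσR] using this
  · have h : Filter.Tendsto (fun R : ℝ => Real.exp (-R)) Filter.atTop (nhds 0) :=
      Real.tendsto_exp_neg_atTop_nhds_zero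
    simpa using (h.const_mul C).mul_const |b - a|

lemma integral_latticeSum_mul_eval {n : ℕ} (hn : 0 < n) {P Q : Polynomial ℂ}
    (hPQ : ∀ u, P.eval u - P.eval (u - 1) = Q.eval u) {a : ℝ} (ha0 : 0 < a) (ha1 : a < 1) :
    I * ∫ y : ℝ, latticeSum n (a + y * I) * Q.eval (a + y * I) = 2 * π * I * P.coeff n := by
  have hint := integrable_latticeSum_mul_eval hn Q (a := a) (by rwa [abs_of_pos ha0]) ha0.ne'
  have hlim := (intervalIntegral_tendsto_integral hint Filter.tendsto_neg_atTop_atBot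
    Filter.tendsto_id).const_mul I
  have htop := tendsto_integral_horizontal_latticeSum hn P (a := a - 1) (b := a) (by linarith)
    (by linarith) ha1 (σ := 1) (by simp)
  have hbot := tendsto_integral_horizontal_latticeSum hn P (a := a - 1) (b := a) (by linarith)
    (by linarith) ha1 (σ := -1) (by simp)
  have hlim' := (htop.sub hbot).const_add (2 * π * I * P.coeff n)
  simp only [sub_zero, add_zero] at hlim'
  refine tendsto_nhds_unique hlim (hlim'.congr' ?_)
  filter_upwards [Filter.eventually_gt_atTop 0] with R hR
  rw [← rectIntegral_latticeSum hn P (a := a - 1) (b := a) (by linarith) (by linarith) ha0 ha1 hR]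
  have hc := ContinuousOn.latticeSum_mul_eval hn P
  have hsplit : ∀ y : ℝ, latticeSum n (a + y * I) * Q.eval (a + y * I) =
      latticeSum n (a + y * I) * P.eval (a + y * I) -
        latticeSum n ((a - 1 : ℝ) + y * I) * P.eval ((a - 1 : ℝ) + y * I) := by
    intro y
    have h1 : ((a - 1 : ℝ) + y * I : ℂ) = (a + y * I) + ((-1 : ℤ) : ℂ) := by push_cast; ring
    rw [h1, latticeSum_add_int, ← hPQ]
    push_cast
    rw [← sub_eq_add_neg]
    ring
  simp only [hsplit, id_eq, rectIntegral]
  rw [intervalIntegral.integral_sub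
    ((hc.comp_vertical (by rwa [abs_of_pos ha0]) ha0.ne').intervalIntegrable _ _)
    ((hc.comp_vertical (by rw [abs_lt]; constructor <;> linarith)
      (by linarith)).intervalIntegrable _ _)]
  simp only [one_mul, neg_one_mul]
  ring

lemma S1_eq_latticeSum (D n : ℕ) (h : ℤ) (z : ℂ) :
    S1 D n h z = 2 * (-1) ^ (n + 1) * latticeSum n (Int.fract ((h : ℝ) / D) + z) := by
  have h1 : (h : ℂ) / D = (Int.fract ((h : ℝ) / D) : ℝ) + (⌊(h : ℝ) / D⌋ : ℂ) := by
    have := congrArg (fun x : ℝ => (x : ℂ)) (Int.fract_add_floor ((h : ℝ) / D))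
    push_cast at this
    exact this.symm
  rw [← latticeSum_add_int n _ ⌊(h : ℝ) / D⌋, S1, latticeSum, h1]
  congr 1
  refine tsum_congr fun d => ?_
  congr 2
  ring

lemma S1_neg (D n : ℕ) (h : ℤ) (z : ℂ) :
    S1 D n (-h) z = (-1) ^ (n + 1) * S1 D n h (-z) := by
  have h1 := latticeSum_neg n (-z + (h : ℂ) / D)
  unfold latticeSum at h1
  rw [S1, S1, mul_left_comm, ← h1]
  congr 1
  refine tsum_congr fun d => ?_
  congr 2
  push_cast
  ring

lemma fract_intCast_div_pos {D : ℕ} (hD : D ≠ 0) {h : ℤ} (hh : ¬ (D : ℤ) ∣ h) :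
    0 < Int.fract ((h : ℝ) / D) := by
  refine lt_of_le_of_ne (Int.fract_nonneg _) fun h0 => hh ?_
  have hD' : (D : ℝ) ≠ 0 := Nat.cast_ne_zero.mpr hD
  obtain ⟨m, hm⟩ := Int.fract_eq_zero_iff.mp h0.symm
  refine ⟨m, ?_⟩
  rw [eq_div_iff hD'] at hm
  have : (m * D : ℤ) = h := by exact_mod_cast hm
  rw [← this, mul_comm]

/-- the twisted period-polynomial contribution of the matrices with
`a = 0`: for `0 < n < w`, `D ∤ h`,
`F_{1,h}(X) = c_n·(−1)^n·(2i)^{w+1}·B_{ñ+1}({h/D} + X)/(ñ+1)`. -/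
theorem F1_eval (w : ℕ) (hw : 2 ≤ w) (hwe : Even w) (n : ℕ) (hn0 : 0 < n) (hnw : n < w)
    (D : ℕ) (hD : 1 < D) (h : ℤ) (hh : ¬ (D : ℤ) ∣ h) (X : ℂ) :
    intI (fun z => S1 D n h z * (X - z) ^ w) +
      (-1 : ℂ) ^ (n - 1) * intI (fun z => S1 D n (-h) z * (X + z) ^ w) =
    cconst w n * (-1) ^ n * (2 * Complex.I) ^ (w + 1) *
      bpoly (w - n + 1) (((Int.fract ((h : ℝ) / D) : ℝ) : ℂ) + X) / (w - n + 1) := by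
  have ha0 := fract_intCast_div_pos (by omega) hh
  have ha1 := Int.fract_lt_one ((h : ℝ) / D)
  have hS := S1_eq_latticeSum D n h
  set a := Int.fract ((h : ℝ) / D)
  set Q : Polynomial ℂ := (Polynomial.C (a + X) - Polynomial.X) ^ w with hQ
  set f : ℝ → ℂ := fun y => latticeSum n (a + y * I) * Q.eval (a + y * I) with hf
  have hint : Integrable f :=
    integrable_latticeSum_mul_eval hn0 Q (by rwa [abs_of_pos ha0]) ha0.ne'
  have hmain : I * ∫ y, f y = 2 * π * I * (bernoulliPrimitive w (a + X)).coeff n :=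
    integral_latticeSum_mul_eval hn0
      (fun u => by rw [eval_bernoulliPrimitive_sub, hQ]; simp) ha0 ha1
  have hterm : ∀ y : ℝ, S1 D n h (I * y) * (X - I * y) ^ w = 2 * (-1) ^ (n + 1) * f y := by
    intro y
    simp only [hS, hf, hQ, Polynomial.eval_pow, Polynomial.eval_sub, Polynomial.eval_C,
      Polynomial.eval_X]
    ring_nf
  have hsq : ((-1 : ℂ) ^ n) * (-1) ^ n = 1 := by rw [← mul_pow]; norm_num
  have h1 : intI (fun z => S1 D n h z * (X - z) ^ w) =
      2 * (-1) ^ (n + 1) * (I * ∫ y in Set.Ioi (0 : ℝ), f y) := by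
    simp only [intI, hterm, integral_const_mul]
    ring
  have h2 : intI (fun z => S1 D n (-h) z * (X + z) ^ w) =
      2 * (I * ∫ y in Set.Iic (0 : ℝ), f y) := by
    have hterm' : ∀ y : ℝ, S1 D n (-h) (I * y) * (X + I * y) ^ w = 2 * f (-y) := by
      intro y
      have := hterm (-y)
      simp only [ofReal_neg, mul_neg, sub_neg_eq_add] at this
      rw [S1_neg, mul_assoc, this]
      linear_combination (2 * f (-y)) * hsq
    simp only [intI, hterm', integral_const_mul, integral_comp_neg_Ioi, neg_zero]
    ring
  have hc : cconst w n * (2 * I) ^ (w + 1) = (-1) ^ n * 4 * π * I * w.choose n := by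
    have h3 : (2 * I) ^ (-(w : ℤ) - 1) * (2 * I) ^ (w + 1) = 1 := by
      rw [← zpow_natCast, ← zpow_add₀ (by simp)]
      simp
    rw [cconst]
    linear_combination ((-1) ^ n * 4 * π * I * w.choose n) * h3
  have hpow : (-1 : ℂ) ^ (n - 1) = (-1) ^ (n + 1) := by
    obtain ⟨m, rfl⟩ : ∃ m, n = m + 1 := ⟨n - 1, by omega⟩
    rw [Nat.add_sub_cancel]; ring
  rw [show cconst w n * (-1) ^ n * (2 * I) ^ (w + 1) =
    (-1) ^ n * (cconst w n * (2 * I) ^ (w + 1)) by ring, hc, h1, h2, hpow]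
  rw [← intervalIntegral.integral_Iic_add_Ioi hint.integrableOn hint.integrableOn,
    coeff_bernoulliPrimitive hnw.le] at hmain
  linear_combination (2 * (-1) ^ (n + 1)) * hmain

end
end

section
/- Let w ≥ 2 be even, let n be an integer with 0 < n < w, set ñ = w − n, let D > 1 and let h be an integer with D ∤ h. Define S_{2,h}(z) = 2·Σ_{b ∈ ℤ} 1/(z + h/D + b)^{ñ+1} for z in the upper half-plane, and F_{2,h}(X) = ∫₀^{i∞} S_{2,h}(z)(X−z)^w dz + (−1)^{n−1}·∫₀^{i∞} S_{2,−h}(z)(X+z)^w dz. Then for every complex number X: F_{2,h}(X) = −c_n·(2i)^{w+1}·B_{n+1}({h/D} + X)/(n+1), where c_n = (−1)^n·4πi·(2i)^{−w−1}·C(w,n). -/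
open MeasureTheory Complex Real

noncomputable section

/-- `S_{2,h}(z) = 2 Σ_{b ∈ ℤ} 1/(z + h/D + b)^{ñ+1}`. -/
def S2 (D w n : ℕ) (h : ℤ) (z : ℂ) : ℂ :=
  2 * ∑' b : ℤ, 1 / (z + (h : ℂ) / D + b) ^ (w - n + 1)


/-- The polynomials with `(q d/dq)^j (q/(1-q)) = eul j (q/(1-q))`. -/
def eul : ℕ → Polynomial ℂ
  | 0 => Polynomial.X
  | j + 1 => Polynomial.derivative (eul j) * (Polynomial.X + Polynomial.X ^ 2)

lemma eul_succ_comp (j : ℕ) :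
    (eul (j + 1)).comp (-1 - Polynomial.X) = (-1) ^ j * eul (j + 1) := by
  induction j with
  | zero => simp [eul]; ring
  | succ j ih =>
    have h := congrArg Polynomial.derivative ih
    have hc : ((-1 : Polynomial ℂ)) ^ j = Polynomial.C ((-1) ^ j) := by simp
    rw [Polynomial.derivative_comp, hc, Polynomial.derivative_C_mul, ← hc] at h
    simp only [Polynomial.derivative_sub, Polynomial.derivative_neg, Polynomial.derivative_one,
      Polynomial.derivative_X] at h
    have h' : (Polynomial.derivative (eul (j + 1))).comp (-1 - Polynomial.X)
        = (-1) ^ (j + 1) * Polynomial.derivative (eul (j + 1)) := by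
      rw [pow_succ]; linear_combination -h
    rw [eul, Polynomial.mul_comp, h']
    simp only [Polynomial.add_comp, Polynomial.X_comp, Polynomial.pow_comp]
    ring

lemma eval_eul_reflect (j : ℕ) (u : ℂ) :
    (eul (j + 1)).eval (-1 - u) = (-1) ^ j * (eul (j + 1)).eval u := by
  have h := congrArg (Polynomial.eval u) (eul_succ_comp j)
  simpa [Polynomial.eval_comp] using h

lemma X_dvd_eul (j : ℕ) : Polynomial.X ∣ eul j := by
  cases j with
  | zero => exact dvd_rfl
  | succ j => exact Dvd.dvd.mul_left ⟨1 + Polynomial.X, by ring⟩ _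

lemma hasSum_eul (j : ℕ) {q : ℂ} (hq : ‖q‖ < 1) :
    HasSum (fun r : ℕ => (r : ℂ) ^ (j + 1) * q ^ r) ((eul (j + 1)).eval (q / (1 - q))) := by
  induction j generalizing q with
  | zero =>
    have hq1 : 1 - q ≠ 0 := by
      intro h0; rw [sub_eq_zero] at h0; simp [← h0] at hq
    have hv : (eul (0 + 1)).eval (q / (1 - q)) = q / (1 - q) ^ 2 := by
      simp only [eul, Polynomial.derivative_X, one_mul, Polynomial.eval_add, Polynomial.eval_X,
        Polynomial.eval_pow]
      field_simp
      ring
    rw [hv]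
    simpa using hasSum_coe_mul_geometric_of_norm_lt_one hq
  | succ j ih =>
    have hs : Summable (fun r : ℕ => (r : ℂ) ^ (j + 1 + 1) * q ^ r) :=
      summable_pow_mul_geometric_of_norm_lt_one _ hq
    obtain ⟨ρ, hqρ, hρ⟩ := exists_between hq
    have hρ0 : 0 < ρ := (norm_nonneg q).trans_lt hqρ
    have hqb : q ∈ Metric.ball (0 : ℂ) ρ := mem_ball_zero_iff.mpr hqρ
    have hρn : ‖ρ‖ < 1 := by rwa [Real.norm_of_nonneg hρ0.le]
    have hsum : Summable (fun r : ℕ => ρ⁻¹ * ((r : ℝ) ^ (j + 2) * ρ ^ r)) := by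
      apply Summable.mul_left
      exact summable_pow_mul_geometric_of_norm_lt_one (j + 2) hρn
    have hbound : ∀ (r : ℕ) (z : ℂ), z ∈ Metric.ball (0 : ℂ) ρ →
        ‖(r : ℂ) ^ (j + 1) * (r * z ^ (r - 1))‖ ≤ ρ⁻¹ * ((r : ℝ) ^ (j + 2) * ρ ^ r) := by
      intro r z hz
      rcases r with _ | r
      · simp
      · have h1 : ‖z‖ ^ r ≤ ρ ^ r :=
          pow_le_pow_left₀ (norm_nonneg _) (mem_ball_zero_iff.mp hz).le _
        have h2 : ρ⁻¹ * (((r + 1 : ℕ) : ℝ) ^ (j + 2) * ρ ^ (r + 1))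
            = ((r + 1 : ℕ) : ℝ) ^ (j + 1) * (((r + 1 : ℕ) : ℝ) * ρ ^ r) := by
          field_simp
          ring
        rw [h2, norm_mul, norm_mul, norm_pow, norm_pow, Complex.norm_natCast, Nat.add_sub_cancel]
        gcongr
    have hterm : ∀ (r : ℕ) (z : ℂ), z ∈ Metric.ball (0 : ℂ) ρ →
        HasDerivAt (fun z : ℂ => (r : ℂ) ^ (j + 1) * z ^ r)
          ((r : ℂ) ^ (j + 1) * (r * z ^ (r - 1))) z :=
      fun r z _ => (hasDerivAt_pow r z).const_mul _
    have hd := hasDerivAt_tsum_of_isPreconnected hsum Metric.isOpen_ball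
      (convex_ball (0 : ℂ) ρ).isPreconnected hterm hbound hqb (ih hq).summable hqb
    have hq1 : 1 - q ≠ 0 := by
      intro h0; rw [sub_eq_zero] at h0; simp [← h0] at hq
    have hv : HasDerivAt (fun z : ℂ => z / (1 - z)) (1 / (1 - q) ^ 2) q := by
      refine ((hasDerivAt_id' q).fun_div ((hasDerivAt_id' q).const_sub 1) hq1).congr_deriv ?_
      ring
    have hd' : HasDerivAt (fun z : ℂ => (eul (j + 1)).eval (z / (1 - z)))
        ((Polynomial.derivative (eul (j + 1))).eval (q / (1 - q)) * (1 / (1 - q) ^ 2)) q :=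
      HasDerivAt.comp (h₂ := fun u => (eul (j + 1)).eval u) q
        ((eul (j + 1)).hasDerivAt (q / (1 - q))) hv
    have heq := hd.unique (hd'.congr_of_eventuallyEq (by
      filter_upwards [Metric.isOpen_ball.mem_nhds hqb] with z hz
      exact (ih ((mem_ball_zero_iff.mp hz).trans hρ)).tsum_eq))
    convert hs.hasSum using 1
    have h3 : ∑' r : ℕ, (r : ℂ) ^ (j + 1 + 1) * q ^ r
        = q * ∑' r : ℕ, (r : ℂ) ^ (j + 1) * (r * q ^ (r - 1)) := by
      rw [← tsum_mul_left]
      congr 1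
      ext r
      rcases r with _ | r
      · simp
      · simp; ring
    rw [h3, heq, eul]
    simp only [Polynomial.eval_mul, Polynomial.eval_add, Polynomial.eval_X, Polynomial.eval_pow]
    field_simp
    ring

lemma bpoly_add (k : ℕ) (x t : ℂ) :
    bpoly k (x + t) = ∑ i ∈ Finset.range (k + 1), (k.choose i : ℂ) * x ^ (k - i) * bpoly i t := by
  have hD : ∀ i ≤ k, (Polynomial.derivative^[i]) (Polynomial.bernoulli k)
      = Polynomial.C (k.descFactorial i : ℚ) * Polynomial.bernoulli (k - i) := by
    intro i
    induction i with
    | zero => simp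
    | succ i ih =>
      intro hi
      rw [Function.iterate_succ_apply', ih (by omega), Polynomial.derivative_C_mul,
        Polynomial.derivative_bernoulli, Nat.descFactorial_succ, Nat.sub_sub]
      push_cast
      simp only [map_mul, map_natCast]
      ring
  set P := (Polynomial.bernoulli k).map (algebraMap ℚ ℂ) with hP
  have hb : ∀ (i : ℕ) (y : ℂ), bpoly i y
      = ((Polynomial.bernoulli i).map (algebraMap ℚ ℂ)).eval y := fun i y => by
    rw [bpoly, Polynomial.aeval_def, Polynomial.eval_map]
  have hcoeff : ∀ i ≤ k, (Polynomial.taylor t P).coeff i = k.choose i * bpoly (k - i) t := by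
    intro i hi
    have h1 : i.factorial • Polynomial.hasseDeriv i P = Polynomial.derivative^[i] P :=
      congrFun (Polynomial.factorial_smul_hasseDeriv i) P
    have h2 := congrArg (Polynomial.eval t) h1
    rw [hP, Polynomial.iterate_derivative_map, hD i hi] at h2
    have hfac : (i.factorial : ℂ) ≠ 0 := by exact_mod_cast i.factorial_ne_zero
    rw [Polynomial.taylor_coeff, hb]
    apply mul_left_cancel₀ hfac
    simpa [Nat.descFactorial_eq_factorial_mul_choose, mul_assoc] using h2
  have hdeg : (Polynomial.taylor t P).natDegree < k + 1 := by
    rw [Polynomial.natDegree_taylor, Nat.lt_succ_iff, Polynomial.natDegree_le_iff_coeff_eq_zero]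
    intro i hi
    rw [hP, Polynomial.coeff_map, Polynomial.coeff_bernoulli, if_neg (by omega), map_zero]
  rw [hb, ← Polynomial.taylor_eval, Polynomial.eval_eq_sum_range' hdeg, ← Finset.sum_range_reflect]
  refine Finset.sum_congr rfl fun i hi => ?_
  have hi' : i ≤ k := by simpa [Nat.lt_succ_iff] using hi
  rw [show k + 1 - 1 - i = k - i by omega, hcoeff _ (by omega), Nat.choose_symm hi',
    Nat.sub_sub_self hi']
  ring

/-- `q/(1-q)` at `q = exp(2πi(τ + iy))`, as a function on the whole line. -/
def cuspU (τ y : ℝ) : ℂ := (Complex.exp (2 * π * (y - τ * I)) - 1)⁻¹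

lemma exp_sub_one_ne_zero {τ : ℝ} (hτ : ∀ k : ℤ, τ ≠ k) (y : ℝ) :
    Complex.exp (2 * π * (y - τ * I)) - 1 ≠ 0 := by
  rw [sub_ne_zero, Ne, Complex.exp_eq_one_iff]
  rintro ⟨n, hn⟩
  have h := congrArg Complex.im hn
  simp at h
  apply hτ (-n)
  have hpi := Real.pi_pos
  push_cast
  have : 2 * π * (τ + n) = 0 := by linarith
  rcases mul_eq_zero.mp this with h0 | h0
  · linarith
  · linarith

lemma forall_ne_neg {τ : ℝ} (hτ : ∀ k : ℤ, τ ≠ k) (k : ℤ) : -τ ≠ k := fun h =>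
  hτ (-k) (by push_cast; linarith)

lemma cuspU_neg {τ : ℝ} (hτ : ∀ k : ℤ, τ ≠ k) (y : ℝ) :
    cuspU (-τ) (-y) = -1 - cuspU τ y := by
  have h1 := exp_sub_one_ne_zero hτ y
  have h2 := exp_sub_one_ne_zero (forall_ne_neg hτ) (-y)
  have h3 : Complex.exp (2 * π * ((-y : ℝ) - (-τ : ℝ) * I))
      = (Complex.exp (2 * π * (y - τ * I)))⁻¹ := by
    rw [← Complex.exp_neg]; congr 1; push_cast; ring
  have h4 := Complex.exp_ne_zero (2 * π * (y - τ * I))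
  rw [h3] at h2
  rw [cuspU, cuspU, h3]
  generalize Complex.exp (2 * π * (y - τ * I)) = E at *
  field_simp
  have : 1 - E ≠ 0 := fun h => h1 (by linear_combination -h)
  field_simp
  ring

lemma cuspU_eq {τ : ℝ} (hτ : ∀ k : ℤ, τ ≠ k) (y : ℝ) :
    cuspU τ y = Complex.exp (2 * π * I * (τ + y * I))
      / (1 - Complex.exp (2 * π * I * (τ + y * I))) := by
  have h1 := exp_sub_one_ne_zero hτ y
  have h3 : Complex.exp (2 * π * I * (τ + y * I))
      = (Complex.exp (2 * π * (y - τ * I)))⁻¹ := by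
    rw [← Complex.exp_neg]; congr 1; linear_combination (2 * π * y : ℂ) * I_sq
  have h4 := Complex.exp_ne_zero (2 * π * (y - τ * I))
  rw [cuspU, h3]
  generalize Complex.exp (2 * π * (y - τ * I)) = E at *
  have : 1 - E⁻¹ ≠ 0 := by
    intro h
    apply h1
    linear_combination E * h + mul_inv_cancel₀ h4
  field_simp

lemma hasDerivAt_cuspU {τ : ℝ} (hτ : ∀ k : ℤ, τ ≠ k) (y : ℝ) :
    HasDerivAt (cuspU τ) (-(2 * π) * (cuspU τ y + cuspU τ y ^ 2)) y := by
  have h1 := exp_sub_one_ne_zero hτ y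
  have h2 : HasDerivAt (fun y : ℝ => Complex.exp (2 * π * (y - τ * I)) - 1)
      (Complex.exp (2 * π * (y - τ * I)) * (2 * π * 1)) y :=
    ((((hasDerivAt_id y).ofReal_comp.sub_const _).const_mul _).cexp).sub_const _
  refine (h2.fun_inv h1).congr_deriv ?_
  simp only [cuspU]
  field_simp
  ring

lemma hasDerivAt_eval_eul {τ : ℝ} (hτ : ∀ k : ℤ, τ ≠ k) (j : ℕ) (y : ℝ) :
    HasDerivAt (fun y => (eul j).eval (cuspU τ y))
      (-(2 * π) * (eul (j + 1)).eval (cuspU τ y)) y := by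
  refine (HasDerivAt.comp (h₂ := fun u => (eul j).eval u) y
    ((eul j).hasDerivAt (cuspU τ y)) (hasDerivAt_cuspU hτ y)).congr_deriv ?_
  simp only [eul, Polynomial.eval_mul, Polynomial.eval_add, Polynomial.eval_X, Polynomial.eval_pow]
  ring

lemma continuous_cuspU {τ : ℝ} (hτ : ∀ k : ℤ, τ ≠ k) : Continuous (cuspU τ) :=
  continuous_iff_continuousAt.mpr fun y => (hasDerivAt_cuspU hτ y).continuousAt

lemma cuspU_isBigO (τ : ℝ) :
    cuspU τ =O[Filter.atTop] fun y : ℝ => Real.exp (-(2 * π) * y) := by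
  refine Asymptotics.IsBigO.of_bound 2 ?_
  filter_upwards [Filter.eventually_ge_atTop 1] with y hy
  have hE : ‖Complex.exp (2 * π * (y - τ * I))‖ = Real.exp (2 * π * y) := by
    rw [Complex.norm_exp]; simp
  have h2 : 2 ≤ Real.exp (2 * π * y) := by
    have h3 := Real.add_one_le_exp (2 * π * y)
    have h4 := Real.pi_gt_three
    nlinarith
  have h5 : Real.exp (2 * π * y) / 2 ≤ ‖Complex.exp (2 * π * (y - τ * I)) - 1‖ := by
    have h6 := norm_sub_norm_le (Complex.exp (2 * π * (y - τ * I))) 1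
    rw [hE, norm_one] at h6
    linarith
  rw [cuspU, norm_inv, Real.norm_of_nonneg (Real.exp_pos _).le,
    show -(2 * π) * y = -(2 * π * y) by ring, Real.exp_neg]
  calc _ ≤ (Real.exp (2 * π * y) / 2)⁻¹ := inv_anti₀ (by positivity) h5
    _ = _ := by rw [inv_div, div_eq_mul_inv]

lemma tendsto_cuspU (τ : ℝ) : Filter.Tendsto (cuspU τ) Filter.atTop (nhds 0) :=
  (cuspU_isBigO τ).trans_tendsto (by
    refine Real.tendsto_exp_atBot.comp ?_
    exact Filter.tendsto_id.const_mul_atTop_of_neg (by linarith [Real.pi_pos]))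

lemma eval_ofReal_isBigO (P : Polynomial ℂ) {c : ℝ} (hc : 0 < c) :
    (fun y : ℝ => P.eval (y : ℂ)) =O[Filter.atTop] fun y => Real.exp (c * y) := by
  induction P using Polynomial.induction_on' with
  | add p q hp hq => simpa using hp.add hq
  | monomial n a =>
    simp only [Polynomial.eval_monomial]
    refine Asymptotics.IsBigO.const_mul_left ?_ a
    refine Asymptotics.IsBigO.trans (Asymptotics.IsBigO.of_norm_left ?_)
      (isLittleO_pow_exp_pos_mul_atTop n hc).isBigO
    simpa using (Asymptotics.isBigO_refl (fun y : ℝ => y ^ n) Filter.atTop).norm_left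

lemma eval_cuspU_isBigO {p : Polynomial ℂ} (hp : Polynomial.X ∣ p) (τ : ℝ) (P : Polynomial ℂ) :
    (fun y : ℝ => p.eval (cuspU τ y) * P.eval (y : ℂ)) =O[Filter.atTop]
      fun y => Real.exp (-π * y) := by
  obtain ⟨s, rfl⟩ := hp
  have hs : (fun y : ℝ => s.eval (cuspU τ y)) =O[Filter.atTop] fun _ => (1 : ℝ) :=
    ((s.continuous.tendsto 0).comp (tendsto_cuspU τ)).isBigO_one ℝ
  have h := ((cuspU_isBigO τ).mul hs).mul (eval_ofReal_isBigO P Real.pi_pos)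
  refine (h.congr_left fun y => ?_).congr_right fun y => ?_
  · simp
  · rw [mul_one, ← Real.exp_add]; congr 1; ring

lemma integrableOn_eval_cuspU {p : Polynomial ℂ} (hp : Polynomial.X ∣ p) {τ : ℝ}
    (hτ : ∀ k : ℤ, τ ≠ k) (P : Polynomial ℂ) :
    IntegrableOn (fun y : ℝ => p.eval (cuspU τ y) * P.eval (y : ℂ)) (Set.Ioi 0) := by
  have hc : Continuous (fun y : ℝ => p.eval (cuspU τ y) * P.eval (y : ℂ)) :=
    (p.continuous.comp (continuous_cuspU hτ)).mul (P.continuous.comp Complex.continuous_ofReal)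
  refine IntegrableOn.mono_set ?_ Set.Ioi_subset_Ici_self
  exact (hc.locallyIntegrable.locallyIntegrableOn _).integrableOn_of_isBigO_atTop
    (eval_cuspU_isBigO hp τ P)
    ⟨Set.Ioi 0, Filter.Ioi_mem_atTop 0, exp_neg_integrableOn_Ioi 0 Real.pi_pos⟩

lemma eval_eul_cuspU_neg {τ : ℝ} (hτ : ∀ k : ℤ, τ ≠ k) (j : ℕ) (y : ℝ) :
    (eul (j + 1)).eval (cuspU (-τ) (-y)) = (-1) ^ j * (eul (j + 1)).eval (cuspU τ y) := by
  rw [cuspU_neg hτ, eval_eul_reflect]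

lemma integrable_eul_cuspU {τ : ℝ} (hτ : ∀ k : ℤ, τ ≠ k) (j : ℕ) (P : Polynomial ℂ) :
    Integrable (fun y : ℝ => (eul (j + 1)).eval (cuspU τ y) * P.eval (y : ℂ)) := by
  rw [← integrableOn_univ, ← Set.Iic_union_Ioi (a := (0 : ℝ))]
  refine IntegrableOn.union ?_ (integrableOn_eval_cuspU (X_dvd_eul _) hτ P)
  rw [integrableOn_Iic_iff_integrableOn_Iio]
  have h := integrableOn_eval_cuspU (X_dvd_eul (j + 1)) (forall_ne_neg hτ) (P.comp (-Polynomial.X))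
  rw [← neg_zero] at h
  have h2 := (h.comp_neg_Iio).const_mul ((-1) ^ j)
  refine h2.congr (Filter.Eventually.of_forall fun y => ?_)
  simp only [eval_eul_cuspU_neg hτ, Polynomial.eval_comp]
  rw [← mul_assoc, ← mul_assoc, ← mul_pow]
  simp

lemma integral_eul_eq_add {τ : ℝ} (hτ : ∀ k : ℤ, τ ≠ k) (j : ℕ) (P : Polynomial ℂ) :
    ∫ y : ℝ, (eul (j + 1)).eval (cuspU τ y) * P.eval (y : ℂ) =
      (∫ y in Set.Ioi (0 : ℝ), (eul (j + 1)).eval (cuspU τ y) * P.eval (y : ℂ)) +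
      (-1) ^ j * ∫ y in Set.Ioi (0 : ℝ),
        (eul (j + 1)).eval (cuspU (-τ) y) * P.eval (-y : ℂ) := by
  have hi := integrable_eul_cuspU hτ j P
  rw [← setIntegral_univ, ← Set.Iic_union_Ioi (a := (0 : ℝ)),
    setIntegral_union (Set.Iic_disjoint_Ioi le_rfl) measurableSet_Ioi hi.integrableOn
      hi.integrableOn, add_comm]
  congr 1
  rw [← integral_const_mul, ← neg_zero, ← integral_comp_neg_Iic, neg_zero]
  refine integral_congr_ae (Filter.Eventually.of_forall fun y => ?_)
  simp only [eval_eul_cuspU_neg hτ]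
  rw [← mul_assoc, ← mul_assoc, ← mul_pow]
  simp

lemma integral_eul_succ {τ : ℝ} (hτ : ∀ k : ℤ, τ ≠ k) (j : ℕ) (P : Polynomial ℂ) :
    ∫ y : ℝ, (eul (j + 2)).eval (cuspU τ y) * P.eval (y : ℂ) =
      (2 * (π : ℂ))⁻¹ * ∫ y : ℝ, (eul (j + 1)).eval (cuspU τ y) *
        (Polynomial.derivative P).eval (y : ℂ) := by
  have hP : ∀ y : ℝ, HasDerivAt (fun y : ℝ => P.eval (y : ℂ))
      ((Polynomial.derivative P).eval (y : ℂ)) y := fun y => (P.hasDerivAt (y : ℂ)).comp_ofReal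
  have h := integral_mul_deriv_eq_deriv_mul_of_integrable
    (fun y _ => hasDerivAt_eval_eul hτ (j + 1) y) (fun y _ => hP y)
    (integrable_eul_cuspU hτ j (Polynomial.derivative P))
    (by
      convert (integrable_eul_cuspU hτ (j + 1) P).const_mul (-(2 * π : ℂ)) using 2 with y
      simp [mul_assoc])
    (integrable_eul_cuspU hτ j P)
  rw [h]
  simp only [mul_assoc, integral_const_mul]
  have : (π : ℂ) ≠ 0 := by exact_mod_cast Real.pi_ne_zero
  field_simp

lemma integral_eul_pow {τ : ℝ} (hτ : ∀ k : ℤ, τ ≠ k) (X : ℂ) (j k : ℕ) :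
    ((k + j).factorial : ℂ)⁻¹ *
      ∫ y : ℝ, (eul (j + 1)).eval (cuspU τ y) * (X - I * y) ^ (k + j) =
      (-I / (2 * π)) ^ j * ((k.factorial : ℂ)⁻¹ *
      ∫ y : ℝ, (eul 1).eval (cuspU τ y) * (X - I * y) ^ k) := by
  induction j with
  | zero => simp
  | succ j ih =>
    have h := integral_eul_succ hτ j
      ((Polynomial.C X - Polynomial.C I * Polynomial.X) ^ (k + j + 1))
    simp only [Polynomial.derivative_pow, Polynomial.eval_pow, Polynomial.eval_sub,
      Polynomial.eval_mul, Polynomial.eval_C, Polynomial.eval_X, Polynomial.derivative_sub,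
      Polynomial.derivative_C, Polynomial.derivative_mul, Polynomial.derivative_X,
      Polynomial.eval_add, Polynomial.eval_zero, Polynomial.eval_one, Nat.add_sub_cancel] at h
    rw [← add_assoc, h, pow_succ, mul_right_comm, ← ih, Nat.factorial_succ]
    have h2 : ∀ y : ℝ, (eul (j + 1)).eval (cuspU τ y) * (((k + j + 1 : ℕ) : ℂ) *
        (X - I * y) ^ (k + j) * (0 - (0 * (y : ℂ) + I * 1)))
        = (-I * (k + j + 1 : ℕ)) * ((eul (j + 1)).eval (cuspU τ y) * (X - I * y) ^ (k + j)) :=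
      fun y => by ring
    simp only [h2, integral_const_mul]
    have : (π : ℂ) ≠ 0 := by exact_mod_cast Real.pi_ne_zero
    have h3 : ((k + j + 1 : ℕ) : ℂ) ≠ 0 := by exact_mod_cast Nat.succ_ne_zero (k + j)
    have h4 : ((k + j).factorial : ℂ) ≠ 0 := by exact_mod_cast Nat.factorial_ne_zero (k + j)
    rw [Nat.cast_mul]
    field_simp

lemma integral_eul_one {τ : ℝ} (hτ : ∀ k : ℤ, τ ≠ k) :
    ∫ y : ℝ, (eul 1).eval (cuspU τ y) = -(2 * (π : ℂ))⁻¹ := by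
  have hint : Integrable (fun y : ℝ => (eul 1).eval (cuspU τ y)) := by
    simpa using integrable_eul_cuspU hτ 0 1
  have hbot : Filter.Tendsto (cuspU τ) Filter.atBot (nhds (-1)) := by
    have h := ((tendsto_cuspU (-τ)).comp Filter.tendsto_neg_atBot_atTop).const_sub (-1)
    rw [sub_zero] at h
    refine h.congr fun y => ?_
    simp [cuspU_neg hτ]
  have h := integral_of_hasDerivAt_of_tendsto (f := cuspU τ)
    (fun y => by simpa [eul] using hasDerivAt_eval_eul hτ 0 y)
    (hint.const_mul (-(2 * π : ℂ))) hbot (tendsto_cuspU τ)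
  rw [integral_const_mul] at h
  have : (π : ℂ) ≠ 0 := by exact_mod_cast Real.pi_ne_zero
  rw [eq_neg_iff_add_eq_zero]
  field_simp
  linear_combination -h

lemma one_sub_mem_slitPlane {q : ℂ} (hq : ‖q‖ ≤ 1) (hq1 : q ≠ 1) : 1 - q ∈ slitPlane := by
  refine Or.inl ?_
  rw [sub_re, one_re, sub_pos]
  refine ((re_le_norm q).trans hq).lt_of_ne fun h => hq1 ?_
  have h1 : ‖q‖ ^ 2 ≤ 1 := by nlinarith [norm_nonneg q]
  rw [Complex.sq_norm, Complex.normSq_apply, h] at h1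
  exact Complex.ext h (by simp; nlinarith)

lemma integral_Ioi_eul_one_mul {τ : ℝ} (hτ : ∀ k : ℤ, τ ≠ k) :
    ∫ y in Set.Ioi (0 : ℝ), (eul 1).eval (cuspU τ y) * (y : ℂ) =
      -(2 * (π : ℂ))⁻¹ ^ 2 * Complex.log (1 - Complex.exp (2 * π * I * τ)) := by
  have hpi : (π : ℂ) ≠ 0 := by exact_mod_cast Real.pi_ne_zero
  set q : ℝ → ℂ := fun y => Complex.exp (2 * π * I * (τ + y * I)) with hq
  have hqnorm : ∀ y, ‖q y‖ = Real.exp (-(2 * π) * y) := fun y => by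
    simp [hq, Complex.norm_exp]
  have hq1 : ∀ y, q y ≠ 1 := fun y h => by
    apply exp_sub_one_ne_zero hτ y
    have h3 : Complex.exp (2 * π * (y - τ * I)) = (q y)⁻¹ := by
      rw [hq, ← Complex.exp_neg]; congr 1; linear_combination (2 * π * y : ℂ) * I_sq
    rw [h3, h]; simp
  have hslit : ∀ y, 0 ≤ y → 1 - q y ∈ slitPlane := fun y hy => by
    refine one_sub_mem_slitPlane ?_ (hq1 y)
    rw [hqnorm, Real.exp_le_one_iff]
    nlinarith [Real.pi_pos]
  have hqd : ∀ y, HasDerivAt q (-(2 * π) * q y) y := fun y => by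
    have h : HasDerivAt q (Complex.exp (2 * π * I * (τ + y * I)) * (2 * π * I * (1 * I))) y :=
      ((((hasDerivAt_id y).ofReal_comp.mul_const I).const_add _).const_mul _).cexp
    refine h.congr_deriv ?_
    rw [hq]
    linear_combination (2 * π * Complex.exp (2 * π * I * (τ + y * I))) * I_sq
  have hder : ∀ y ∈ Set.Ici (0 : ℝ), HasDerivAt
      (fun y : ℝ => -(2 * (π : ℂ))⁻¹ * ((y : ℂ) * cuspU τ y) +
        (2 * (π : ℂ))⁻¹ ^ 2 * Complex.log (1 - q y))
      ((eul 1).eval (cuspU τ y) * (y : ℂ)) y := fun y hy => by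
    have h1 : HasDerivAt (fun y : ℝ => (y : ℂ)) 1 y := (hasDerivAt_id y).ofReal_comp
    refine (((h1.mul (hasDerivAt_cuspU hτ y)).const_mul _).add
      ((((hqd y).const_sub 1).clog_real (hslit y hy)).const_mul _)).congr_deriv ?_
    have hU := cuspU_eq hτ y
    have h2 : -(-(2 * π) * q y) / (1 - q y) = 2 * π * cuspU τ y := by
      rw [hU]; ring
    rw [h2]
    simp only [eul, Polynomial.derivative_X, one_mul, Polynomial.eval_add, Polynomial.eval_X,
      Polynomial.eval_pow]
    field_simp
    ring
  have hexp : Filter.Tendsto (fun y : ℝ => Real.exp (-π * y)) Filter.atTop (nhds 0) :=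
    Real.tendsto_exp_atBot.comp
      (Filter.tendsto_id.const_mul_atTop_of_neg (by linarith [Real.pi_pos]))
  have hexp2 : Filter.Tendsto (fun y : ℝ => Real.exp (-(2 * π) * y)) Filter.atTop (nhds 0) :=
    Real.tendsto_exp_atBot.comp
      (Filter.tendsto_id.const_mul_atTop_of_neg (by linarith [Real.pi_pos]))
  have hyU : Filter.Tendsto (fun y : ℝ => (y : ℂ) * cuspU τ y) Filter.atTop (nhds 0) := by
    refine ((eval_cuspU_isBigO dvd_rfl τ Polynomial.X).trans_tendsto hexp).congr fun y => ?_
    simp [mul_comm]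
  have hq0 : Filter.Tendsto q Filter.atTop (nhds 0) := by
    rw [tendsto_zero_iff_norm_tendsto_zero]
    exact hexp2.congr fun y => (hqnorm y).symm
  have hlog : Filter.Tendsto (fun y => Complex.log (1 - q y)) Filter.atTop (nhds 0) := by
    have h := (hq0.const_sub 1).clog (by simp)
    simpa using h
  have hint := integrableOn_eval_cuspU (X_dvd_eul 1) hτ Polynomial.X
  simp only [Polynomial.eval_X] at hint
  rw [integral_Ioi_of_hasDerivAt_of_tendsto' hder hint
    ((hyU.const_mul _).add (hlog.const_mul _))]
  simp [hq]

lemma log_sub_log {t : ℝ} (h0 : 0 < t) (h1 : t < 1) :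
    Complex.log (1 - Complex.exp (2 * π * I * t)) -
      Complex.log (1 - Complex.exp (2 * π * I * (-t : ℝ))) = 2 * π * I * (t - 1 / 2) := by
  have hpi := Real.pi_pos
  have hs : 0 < 2 * Real.sin (π * t) :=
    mul_pos two_pos (Real.sin_pos_of_pos_of_lt_pi (by positivity) (by nlinarith))
  have hE := Complex.exp_ne_zero (π * I * t)
  have hhalf : Complex.exp (π * I * (1 / 2)) = I := by
    rw [show (π : ℂ) * I * (1 / 2) = π / 2 * I by ring, Complex.exp_pi_div_two_mul_I]
  have hsin : ((2 * Real.sin (π * t) : ℝ) : ℂ)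
      = ((Complex.exp (π * I * t))⁻¹ - Complex.exp (π * I * t)) * I := by
    push_cast
    rw [Complex.two_sin, ← Complex.exp_neg]
    congr 2 <;> congr 1 <;> ring_nf
  have e1 : 1 - Complex.exp (2 * π * I * t)
      = (2 * Real.sin (π * t) : ℝ) * Complex.exp (π * I * (t - 1 / 2)) := by
    rw [mul_sub, Complex.exp_sub, hhalf, hsin,
      show (2 : ℂ) * π * I * t = π * I * t + π * I * t by ring, Complex.exp_add]
    field_simp
  have e2 : 1 - Complex.exp (2 * π * I * (-t : ℝ))
      = (2 * Real.sin (π * t) : ℝ) * Complex.exp (-(π * I * (t - 1 / 2))) := by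
    rw [Complex.exp_neg, mul_sub, Complex.exp_sub, hhalf, hsin,
      show (2 : ℂ) * π * I * (-t : ℝ) = -(π * I * t + π * I * t) by push_cast; ring,
      Complex.exp_neg, Complex.exp_add]
    field_simp
    linear_combination (Complex.exp (π * I * t) ^ 2 - 1) * I_sq
  have him : (π * I * (t - 1 / 2)).im = π * (t - 1 / 2) := by simp
  rw [e1, e2, Complex.log_ofReal_mul hs (Complex.exp_ne_zero _),
    Complex.log_ofReal_mul hs (Complex.exp_ne_zero _), Complex.log_exp, Complex.log_exp]
  · ring
  · rw [neg_im, him]; nlinarith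
  · rw [neg_im, him]; nlinarith
  · rw [him]; nlinarith
  · rw [him]; nlinarith

lemma hasSum_integral_Ioi {τ : ℝ} (hτ : ∀ k : ℤ, τ ≠ k) {k : ℕ} (hk : 2 ≤ k) :
    HasSum (fun n : ℕ => (k.factorial : ℂ) / (2 * π) ^ (k + 1) *
        (1 / (n : ℂ) ^ k * Complex.exp (2 * π * I * n * τ)))
      (∫ y in Set.Ioi (0 : ℝ), (eul 1).eval (cuspU τ y) * (y : ℂ) ^ k) := by
  have hpi : (π : ℂ) ≠ 0 := by exact_mod_cast Real.pi_ne_zero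
  have hnorm : ∀ n : ℕ, ‖(n : ℂ) * Complex.exp (2 * π * I * n * τ)‖ = n := fun n => by
    rw [norm_mul, Complex.norm_natCast, Complex.norm_exp]
    simp
  have hm := hasSum_mellin (a := fun n : ℕ => (n : ℂ) * Complex.exp (2 * π * I * n * τ))
    (p := fun n : ℕ => 2 * π * n) (F := fun y => (eul 1).eval (cuspU τ y)) (s := (k : ℂ) + 1)
    (fun n => by
      rcases n with _ | n
      · simp
      · right; positivity)
    (by rw [add_re, natCast_re, one_re]; positivity)
    (fun y hy => by
      have hq : ‖Complex.exp (2 * π * I * (τ + y * I))‖ < 1 := by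
        rw [Complex.norm_exp, Real.exp_lt_one_iff]
        simp
        exact mul_pos Real.two_pi_pos hy
      rw [cuspU_eq hτ]
      convert hasSum_eul 0 hq using 2 with n
      rw [zero_add, pow_one, mul_assoc, Complex.ofReal_exp, ← Complex.exp_add, ← Complex.exp_nat_mul]
      congr 2
      push_cast
      linear_combination (-2 * π * n * y : ℂ) * I_sq)
    (by
      simp only [hnorm]
      have h := (Real.summable_one_div_nat_pow.mpr (show 1 < k by omega)).mul_left
        ((2 * π) ^ (k + 1))⁻¹
      refine h.congr fun n => ?_
      rw [add_re, natCast_re, one_re, show (k : ℝ) + 1 = ((k + 1 : ℕ) : ℝ) by push_cast; ring,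
        Real.rpow_natCast, mul_pow]
      rcases eq_or_ne n 0 with rfl | hn
      · simp [show k ≠ 0 by omega]
      · have : (n : ℝ) ≠ 0 := by exact_mod_cast hn
        field_simp
        ring)
  have hF : mellin (fun y => (eul 1).eval (cuspU τ y)) ((k : ℂ) + 1)
      = ∫ y in Set.Ioi (0 : ℝ), (eul 1).eval (cuspU τ y) * (y : ℂ) ^ k := by
    rw [mellin]
    refine integral_congr_ae (Filter.Eventually.of_forall fun y => ?_)
    simp only [add_sub_cancel_right, Complex.cpow_natCast, smul_eq_mul]
    ring
  rw [hF] at hm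
  convert hm using 2 with n
  rw [Complex.Gamma_nat_eq_factorial, show (k : ℂ) + 1 = ((k + 1 : ℕ) : ℂ) by push_cast; ring,
    Complex.cpow_natCast]
  push_cast
  rcases eq_or_ne n 0 with rfl | hn
  · simp [show k ≠ 0 by omega]
  · have : (n : ℂ) ≠ 0 := by exact_mod_cast hn
    field_simp
    ring

lemma bpoly_ofReal (k : ℕ) (t : ℝ) : bpoly k t = bernoulliFun k t := by
  rw [bpoly, bernoulliFun, Polynomial.eval_map_algebraMap]
  exact Polynomial.aeval_algebraMap_apply ℂ t _

lemma ne_intCast_of_mem_Ioo {t : ℝ} (h0 : 0 < t) (h1 : t < 1) (k : ℤ) : t ≠ k := by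
  rintro rfl
  have h2 : 0 < k := by exact_mod_cast h0
  have h3 : k < 1 := by exact_mod_cast h1
  omega

lemma integral_eul_one_mul_pow {t : ℝ} (h0 : 0 < t) (h1 : t < 1) (k : ℕ) :
    (-I) ^ k * ∫ y : ℝ, (eul 1).eval (cuspU t y) * (y : ℂ) ^ k =
      -(2 * (π : ℂ))⁻¹ * bpoly k t := by
  have hpi : (π : ℂ) ≠ 0 := by exact_mod_cast Real.pi_ne_zero
  have ht := ne_intCast_of_mem_Ioo h0 h1
  have hsplit := integral_eul_eq_add ht 0 (Polynomial.X ^ k)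
  simp only [zero_add, Polynomial.eval_pow, Polynomial.eval_X, pow_zero, one_mul] at hsplit
  have hneg : ∀ y : ℝ, (eul 1).eval (cuspU (-t) y) * (-y : ℂ) ^ k
      = (-1) ^ k * ((eul 1).eval (cuspU (-t) y) * (y : ℂ) ^ k) := fun y => by
    rw [neg_pow]; ring
  simp only [hneg, integral_const_mul] at hsplit
  rcases lt_or_ge k 2 with hk | hk
  · interval_cases k
    · simp [integral_eul_one ht, bpoly]
    · simp only [pow_one] at hsplit ⊢
      rw [hsplit, integral_Ioi_eul_one_mul ht, integral_Ioi_eul_one_mul (forall_ne_neg ht)]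
      have hl := log_sub_log h0 h1
      generalize Complex.log (1 - Complex.exp (2 * π * I * t)) = L at *
      generalize Complex.log (1 - Complex.exp (2 * π * I * (-t : ℝ))) = L' at *
      rw [bpoly, Polynomial.bernoulli_one]
      simp only [map_sub, Polynomial.aeval_X, Polynomial.aeval_C, map_inv₀, map_ofNat]
      field_simp
      linear_combination I * hl + 2 * π * (t - 1 / 2) * I_sq
  · have hs := (hasSum_integral_Ioi ht hk).add
      ((hasSum_integral_Ioi (forall_ne_neg ht) hk).mul_left ((-1) ^ k))
    rw [← hsplit] at hs
    have hf := (hasSum_one_div_nat_pow_mul_fourier hk (x := t) ⟨h0.le, h1.le⟩).mul_left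
      ((k.factorial : ℂ) / (2 * π) ^ (k + 1))
    have heq := hs.unique (hf.congr_fun ?_)
    · rw [heq, bpoly_ofReal]
      have : (k.factorial : ℂ) ≠ 0 := by exact_mod_cast k.factorial_ne_zero
      have hI : (-I) ^ k * I ^ k = 1 := by rw [← mul_pow]; simp
      have h2pi : (2 * (π : ℂ)) ^ k ≠ 0 := pow_ne_zero _ (by simp [hpi])
      rw [mul_pow (2 * (π : ℂ)) I, pow_succ (2 * (π : ℂ))]
      generalize (2 * (π : ℂ)) ^ k = A at *
      field_simp
      linear_combination (-1 : ℂ) * bernoulliFun k t * hI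
    · intro n
      simp only [fourier_coe_apply]
      push_cast
      simp
      ring_nf

lemma integral_eul_one_bernoulli {t : ℝ} (h0 : 0 < t) (h1 : t < 1) (k : ℕ) (X : ℂ) :
    ∫ y : ℝ, (eul 1).eval (cuspU t y) * (X - I * y) ^ k =
      -(2 * (π : ℂ))⁻¹ * bpoly k (t + X) := by
  have ht := ne_intCast_of_mem_Ioo h0 h1
  have hint : ∀ i ∈ Finset.range (k + 1), Integrable (fun y : ℝ =>
      (k.choose i : ℂ) * X ^ (k - i) * ((-I) ^ i * ((eul 1).eval (cuspU t y) * (y : ℂ) ^ i))) :=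
    fun i _ => by
      have h := integrable_eul_cuspU ht 0 (Polynomial.X ^ i)
      simp only [Polynomial.eval_pow, Polynomial.eval_X, zero_add] at h
      exact (h.const_mul _).const_mul _
  have hexpand : ∀ y : ℝ, (eul 1).eval (cuspU t y) * (X - I * y) ^ k =
      ∑ i ∈ Finset.range (k + 1), (k.choose i : ℂ) * X ^ (k - i) *
        ((-I) ^ i * ((eul 1).eval (cuspU t y) * (y : ℂ) ^ i)) := fun y => by
    rw [show X - I * y = -I * y + X by ring, add_pow, Finset.mul_sum]
    refine Finset.sum_congr rfl fun i _ => ?_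
    rw [mul_pow]
    ring
  simp only [hexpand]
  rw [integral_finsetSum _ hint, add_comm (t : ℂ), bpoly_add, Finset.mul_sum]
  refine Finset.sum_congr rfl fun i _ => ?_
  rw [integral_const_mul, integral_const_mul, integral_eul_one_mul_pow h0 h1]
  ring

lemma cuspU_add_int (t y : ℝ) (m : ℤ) : cuspU (t + m) y = cuspU t y := by
  rw [cuspU, cuspU]
  congr 2
  rw [Complex.exp_eq_exp_iff_exists_int]
  exact ⟨-m, by push_cast; ring⟩

lemma S2_eq {D w n : ℕ} {h : ℤ} (hnw : n < w) (hτ : ∀ k : ℤ, (h : ℝ) / D ≠ k) {y : ℝ}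
    (hy : 0 < y) :
    S2 D w n h (I * y) = 2 * (-2 * π * I) ^ (w - n + 1) / (w - n).factorial *
      (eul (w - n)).eval (cuspU ((h : ℝ) / D) y) := by
  have him : 0 < (((h : ℝ) / D : ℝ) + y * I : ℂ).im := by simpa using hy
  have hL := EisensteinSeries.qExpansion_identity (k := w - n) (by omega)
    ⟨((h : ℝ) / D : ℝ) + y * I, him⟩
  have hq : ‖Complex.exp (2 * π * I * (((h : ℝ) / D : ℝ) + y * I))‖ < 1 := by
    rw [Complex.norm_exp, Real.exp_lt_one_iff]
    simp
    exact mul_pos Real.two_pi_pos hy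
  have hsum := (hasSum_eul (w - n - 1) hq).tsum_eq
  rw [show w - n - 1 + 1 = w - n by omega, ← cuspU_eq hτ] at hsum
  have hz : I * y + (h : ℂ) / D = ((h : ℝ) / D : ℝ) + y * I := by push_cast; ring
  rw [← hsum, S2, hz, mul_div_assoc, mul_assoc]
  exact congrArg (2 * ·) hL

/-- the twisted period-polynomial contribution of the matrices with
`c = 0`: for `0 < n < w`, `D ∤ h`,
`F_{2,h}(X) = −c_n·(2i)^{w+1}·B_{n+1}({h/D} + X)/(n+1)`. -/
theorem F2_eval (w : ℕ) (hw : 2 ≤ w) (hwe : Even w) (n : ℕ) (hn0 : 0 < n) (hnw : n < w)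
    (D : ℕ) (hD : 1 < D) (h : ℤ) (hh : ¬ (D : ℤ) ∣ h) (X : ℂ) :
    intI (fun z => S2 D w n h z * (X - z) ^ w) +
      (-1 : ℂ) ^ (n - 1) * intI (fun z => S2 D w n (-h) z * (X + z) ^ w) =
    -cconst w n * (2 * Complex.I) ^ (w + 1) *
      bpoly (n + 1) (((Int.fract ((h : ℝ) / D) : ℝ) : ℂ) + X) / (n + 1) := by
  have hpi : (π : ℂ) ≠ 0 := by exact_mod_cast Real.pi_ne_zero
  have hD0 : (D : ℝ) ≠ 0 := by positivity
  have hτ : ∀ k : ℤ, (h : ℝ) / D ≠ k := fun k hk => hh ⟨k, by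
    rw [div_eq_iff hD0] at hk
    have : h = k * D := by exact_mod_cast hk
    rw [this, mul_comm]⟩
  have hτ' : ∀ k : ℤ, ((-h : ℤ) : ℝ) / D ≠ k := fun k => by
    rw [Int.cast_neg, neg_div]; exact forall_ne_neg hτ k
  have hfr : (h : ℝ) / D = Int.fract ((h : ℝ) / D) + (⌊(h : ℝ) / D⌋ : ℤ) :=
    (Int.fract_add_floor _).symm
  have ht1 := Int.fract_lt_one ((h : ℝ) / D)
  have ht0 : 0 < Int.fract ((h : ℝ) / D) := by
    refine (Int.fract_nonneg _).lt_of_ne fun h0 => hτ ⌊(h : ℝ) / D⌋ ?_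
    rw [← h0, zero_add] at hfr
    exact hfr
  have hUt : cuspU ((h : ℝ) / D) = cuspU (Int.fract ((h : ℝ) / D)) := by
    ext y
    conv_lhs => rw [hfr, cuspU_add_int]
  obtain ⟨j, rfl⟩ : ∃ j, w = n + 1 + j := ⟨w - n - 1, by omega⟩
  have hwn : n + 1 + j - n = j + 1 := by omega
  set K : ℂ := 2 * (-2 * π * I) ^ (j + 2) / (j + 1).factorial with hK
  have e1 : intI (fun z => S2 D (n + 1 + j) n h z * (X - z) ^ (n + 1 + j)) =
      I * (K * ∫ y in Set.Ioi (0 : ℝ), (eul (j + 1)).eval (cuspU ((h : ℝ) / D) y) *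
        (X - I * y) ^ (n + 1 + j)) := by
    rw [intI, ← integral_const_mul K]
    congr 1
    refine setIntegral_congr_fun measurableSet_Ioi fun y hy => ?_
    simp only [S2_eq hnw hτ hy, hwn, mul_assoc]
    rw [hK]
    ring
  have e2 : intI (fun z => S2 D (n + 1 + j) n (-h) z * (X + z) ^ (n + 1 + j)) =
      I * (K * ∫ y in Set.Ioi (0 : ℝ), (eul (j + 1)).eval (cuspU (-((h : ℝ) / D)) y) *
        (X - I * (-y)) ^ (n + 1 + j)) := by
    rw [intI, ← integral_const_mul K]
    congr 1
    refine setIntegral_congr_fun measurableSet_Ioi fun y hy => ?_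
    simp only [S2_eq hnw hτ' hy, hwn, Int.cast_neg, neg_div]
    rw [hK]
    ring
  have hsplit := integral_eul_eq_add hτ j
    ((Polynomial.C X - Polynomial.C I * Polynomial.X) ^ (n + 1 + j))
  simp only [Polynomial.eval_pow, Polynomial.eval_sub, Polynomial.eval_mul, Polynomial.eval_C,
    Polynomial.eval_X] at hsplit
  have hsign : (-1 : ℂ) ^ (n - 1) = (-1) ^ j := by
    rw [neg_one_pow_congr]
    grind
  have hsum := integral_eul_pow hτ X j (n + 1)
  rw [hUt, integral_eul_one_bernoulli ht0 ht1, ← hUt, hsplit] at hsum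
  rw [e1, e2, hsign]
  have hfac : (((n + 1 + j).factorial : ℕ) : ℂ)
      = ((n + 1 + j).choose n : ℂ) * n.factorial * (j + 1).factorial := by
    rw [← Nat.choose_mul_factorial_mul_factorial hnw.le, hwn]; push_cast; ring
  have hc : cconst (n + 1 + j) n * (2 * I) ^ (n + 1 + j + 1)
      = (-1) ^ n * 4 * π * I * (n + 1 + j).choose n := by
    have h2I : (2 * I : ℂ) ≠ 0 := by simp
    rw [cconst, ← zpow_natCast (2 * I) (n + 1 + j + 1)]
    have : (2 * I : ℂ) ^ (-((n + 1 + j : ℕ) : ℤ) - 1) * (2 * I) ^ ((n + 1 + j + 1 : ℕ) : ℤ) = 1 := by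
      rw [← zpow_add₀ h2I]
      convert zpow_zero (2 * I : ℂ) using 2
      push_cast
      ring
    linear_combination ((-1) ^ n * 4 * π * I * (n + 1 + j).choose n) * this
  have hpow : (-2 * π * I) ^ (j + 2) * (-I / (2 * π)) ^ j = -4 * π ^ 2 * (-1 : ℂ) ^ j := by
    have h1 : (-2 * π * I) * (-I / (2 * π)) = (-1 : ℂ) := by
      field_simp
      simp
    rw [pow_add, mul_right_comm, ← mul_pow, h1]
    linear_combination (-1) ^ j * 4 * π ^ 2 * I_sq
  have hsign' : (-1 : ℂ) ^ n = -(-1) ^ j := by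
    rw [← hsign]
    obtain ⟨m, rfl⟩ : ∃ m, n = m + 1 := ⟨n - 1, by omega⟩
    rw [Nat.add_sub_cancel, pow_succ]
    ring
  rw [neg_mul, hc, hsign']
  generalize (∫ y in Set.Ioi (0 : ℝ), (eul (j + 1)).eval (cuspU ((h : ℝ) / D) y) *
        (X - I * y) ^ (n + 1 + j)) = A at *
  generalize (∫ y in Set.Ioi (0 : ℝ), (eul (j + 1)).eval (cuspU (-((h : ℝ) / D)) y) *
        (X - I * (-y)) ^ (n + 1 + j)) = B at *
  generalize bpoly (n + 1) (((Int.fract ((h : ℝ) / D) : ℝ) : ℂ) + X) = b at *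
  have hf1 : ((n + 1 + j).factorial : ℂ) ≠ 0 := by exact_mod_cast Nat.factorial_ne_zero _
  have hf2 : (n.factorial : ℂ) ≠ 0 := by exact_mod_cast Nat.factorial_ne_zero _
  have hf3 : ((j + 1).factorial : ℂ) ≠ 0 := by exact_mod_cast Nat.factorial_ne_zero _
  have hn1 : (n : ℂ) + 1 ≠ 0 := by exact_mod_cast Nat.succ_ne_zero n
  have hAB : A + (-1) ^ j * B = ((n + 1 + j).choose n * (j + 1).factorial / (n + 1)) *
      ((-I / (2 * π)) ^ j * (-(2 * (π : ℂ))⁻¹ * b)) := by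
    rw [inv_mul_eq_iff_eq_mul₀ hf1, hfac, Nat.factorial_succ n] at hsum
    rw [hsum]
    push_cast
    field_simp
  calc _ = I * K * (A + (-1) ^ j * B) := by ring
    _ = I * 2 * ((-2 * π * I) ^ (j + 2) * (-I / (2 * π)) ^ j) *
        ((n + 1 + j).choose n / (n + 1) * (-(2 * (π : ℂ))⁻¹ * b)) := by
      rw [hAB, hK]
      field_simp
    _ = _ := by
      rw [hpow]
      field_simp

end
end
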